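/- arXiv:0905.2497 — 8 statements merged into one kernel-verified Lean document; each statement's English description precedes it below -/
import Mathlib

section
/- Suppose Y ⊂ ℝ^p and K are compact. Then the set-valued mapping y ↦ K_y is Borel measurable as a map from Y into the space of nonempty compact subsets of ℝ^n topologized by the Hausdorff metric, and the optimal value function y ↦ J(y) is Borel measurable on Y. -/
open MeasureTheory Set TopologicalSpace Filter Topology

/-!
A compact set in a product projects onto a compact set. Applied to the part of `K` lying over a
closed set `C` of the first factor, this says that the sections of `K` vary upper hemicontinuously;
applied to the sublevel sets of `f` on `K`, it says that the optimal value function is lower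
semicontinuous, because `f` attains its infimum on every section. Since open sets are countable
unions of closed ones, the sets of compacta hitting a closed set generate the Borel σ-algebra of
the hyperspace, so upper hemicontinuity implies measurability.
-/

section Hyperspace

variable {X : Type*} [TopologicalSpace X] [PseudoMetrizableSpace X] [SecondCountableTopology X]

theorem borel_nonemptyCompacts_eq_generateFrom_inter_isClosed_nonempty :
    borel (NonemptyCompacts X) =
      .generateFrom {A | ∃ C : Set X, IsClosed C ∧
        A = {L : NonemptyCompacts X | ((L : Set X) ∩ C).Nonempty}} := by
  set 𝒜 := {A | ∃ C : Set X, IsClosed C ∧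
    A = {L : NonemptyCompacts X | ((L : Set X) ∩ C).Nonempty}}
  have hit_closed {C : Set X} (hC : IsClosed C) :
      MeasurableSet[.generateFrom 𝒜] {L : NonemptyCompacts X | ((L : Set X) ∩ C).Nonempty} :=
    MeasurableSpace.measurableSet_generateFrom ⟨C, hC, rfl⟩
  apply le_antisymm
  · rw [borel_eq_generateFrom_of_subbasis
      (induced_generateFrom_eq (f := ((↑) : NonemptyCompacts X → Set X)))]
    apply MeasurableSpace.generateFrom_le
    rintro _ ⟨_, ⟨U, hU : IsOpen U, rfl⟩ | ⟨U, hU : IsOpen U, rfl⟩, rfl⟩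
    · convert MeasurableSet.compl (m := .generateFrom 𝒜) (hit_closed hU.isClosed_compl) using 1
      ext L
      simp [inter_compl_nonempty_iff]
    · let := pseudoMetrizableSpacePseudoMetric X
      obtain ⟨C, hC, -, rfl, -⟩ := hU.exists_iUnion_isClosed
      convert MeasurableSet.iUnion (m := .generateFrom 𝒜) fun i => hit_closed (hC i) using 1
      ext L
      simp [inter_iUnion, nonempty_iUnion]
  · apply MeasurableSpace.generateFrom_le
    rintro _ ⟨C, hC, rfl⟩
    borelize (NonemptyCompacts X)
    exact (NonemptyCompacts.isClosed_inter_nonempty_of_isClosed hC).measurableSet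

theorem measurable_nonemptyCompacts_of_upperHemicontinuous {Ω : Type*} [TopologicalSpace Ω]
    [MeasurableSpace Ω] [OpensMeasurableSpace Ω] {F : Ω → NonemptyCompacts X}
    (hF : UpperHemicontinuous fun ω => (F ω : Set X)) :
    Measurable[_, borel (NonemptyCompacts X)] F := by
  rw [borel_nonemptyCompacts_eq_generateFrom_inter_isClosed_nonempty]
  apply measurable_generateFrom
  rintro _ ⟨C, hC, rfl⟩
  convert (upperHemicontinuous_iff_isClosed_compl_preimage_Iic_compl.1 hF C hC).measurableSet
    using 1
  ext ω
  simp [← inter_compl_nonempty_iff]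

end Hyperspace

section Sections

variable {X Z R : Type*} [TopologicalSpace X] [TopologicalSpace Z] {K : Set (X × Z)}

theorem isCompact_section [T1Space Z] (hK : IsCompact K) (z : Z) :
    IsCompact {x | (x, z) ∈ K} := by
  have hfiber : IsCompact (K ∩ Prod.snd ⁻¹' {z}) :=
    hK.inter_right (isClosed_singleton.preimage continuous_snd)
  convert hfiber.image continuous_fst using 1
  ext x
  simp

theorem upperHemicontinuous_section [T2Space Z] (hK : IsCompact K) :
    UpperHemicontinuous fun z => {x | (x, z) ∈ K} := by
  rw [upperHemicontinuous_iff_isClosed_compl_preimage_Iic_compl]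
  intro C hC
  have hproj : IsClosed (Prod.snd '' (K ∩ Prod.fst ⁻¹' C)) :=
    ((hK.inter_right (hC.preimage continuous_fst)).image continuous_snd).isClosed
  convert hproj using 1
  ext z
  simp [not_subset]

theorem sInf_image_le_iff_of_isCompact [ConditionallyCompleteLinearOrder R] {S : Set X} {g : X → R}
    (hS : IsCompact S) (hne : S.Nonempty) (hg : LowerSemicontinuousOn g S) {c : R} :
    sInf (g '' S) ≤ c ↔ ∃ x ∈ S, g x ≤ c := by
  obtain ⟨a, ha, hmin⟩ := hg.exists_isMinOn hne hS
  have hleast : IsLeast (g '' S) (g a) := ⟨mem_image_of_mem g ha, forall_mem_image.2 hmin⟩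
  rw [hleast.csInf_eq]
  exact ⟨fun hac => ⟨a, ha, hac⟩, fun ⟨_, hx, hxc⟩ => (hmin hx).trans hxc⟩

theorem lowerSemicontinuousOn_sInf_image_section [T2Space Z]
    [ConditionallyCompleteLinearOrder R] (hK : IsCompact K) {f : X × Z → R}
    (hf : LowerSemicontinuousOn f K) {Y : Set Z} (hne : ∀ y ∈ Y, {x | (x, y) ∈ K}.Nonempty) :
    LowerSemicontinuousOn (fun z => sInf ((fun x => f (x, z)) '' {x | (x, z) ∈ K})) Y := by
  rw [lowerSemicontinuousOn_iff_preimage_Iic]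
  intro c
  refine ⟨Prod.snd '' (K ∩ f ⁻¹' Iic c),
    ((hf.isCompact_inter_preimage_Iic hK c).image continuous_snd).isClosed, ?_⟩
  ext y
  refine and_congr_right fun hy => ?_
  have hfy : LowerSemicontinuousOn (fun x => f (x, y)) {x | (x, y) ∈ K} :=
    hf.comp (Continuous.prodMk_left y).continuousOn fun _ hx => hx
  have hle := sInf_image_le_iff_of_isCompact (isCompact_section hK y) (hne y hy) hfy
    (c := c)
  simpa using hle

end Sections

theorem stmt0_general {X Z R : Type*} [Nonempty X] [TopologicalSpace X] [PseudoMetrizableSpace X]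
    [SecondCountableTopology X] [TopologicalSpace Z] [T2Space Z] [MeasurableSpace Z]
    [OpensMeasurableSpace Z] [ConditionallyCompleteLinearOrder R] [TopologicalSpace R]
    [OrderTopology R] [SecondCountableTopology R] [MeasurableSpace R] [BorelSpace R]
    {K : Set (X × Z)} (hK : IsCompact K) {Y : Set Z} {S : Z → Set X}
    (hS : ∀ y ∈ Y, S y = {x | (x, y) ∈ K}) (hne : ∀ y ∈ Y, (S y).Nonempty)
    {f : X × Z → R} (hf : LowerSemicontinuousOn f K) {J : Z → R}
    (hJ : ∀ y ∈ Y, J y = sInf ((fun x => f (x, y)) '' S y)) :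
    (∃ F : Z → NonemptyCompacts X, (∀ y ∈ Y, (F y : Set X) = S y) ∧
      Measurable[_, borel (NonemptyCompacts X)] fun y : Y => F y) ∧
    Measurable fun y : Y => J y := by
  constructor
  · have hcompact : ∀ y ∈ Y, ∃ L : NonemptyCompacts X, (L : Set X) = S y := fun y hy =>
      ⟨⟨⟨S y, hS y hy ▸ isCompact_section hK y⟩, hne y hy⟩, rfl⟩
    choose! F hF using hcompact
    refine ⟨F, hF, measurable_nonemptyCompacts_of_upperHemicontinuous ?_⟩
    have hsection (y : Y) : (F y : Set X) = {x | (x, (y : Z)) ∈ K} :=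
      (hF y y.2).trans (hS y y.2)
    simp only [hsection]
    exact (upperHemicontinuous_section hK).comp continuous_subtype_val
  · have hlsc := lowerSemicontinuousOn_sInf_image_section hK hf
      fun y hy => hS y hy ▸ hne y hy
    convert (lowerSemicontinuous_restrict_iff.2 hlsc).measurable using 2 with y
    exact (hJ y y.2).trans (by rw [hS y y.2]; rfl)

/-- measurability of the set-valued map `y ↦ K_y` (viewed as a map into the
space of nonempty compact subsets of ℝ^n with the Hausdorff metric) and of the optimal
value function `J` on `Y`. -/
theorem stmt0 (n p m : ℕ)
    (Y : Set (Fin p → ℝ)) (hYc : IsCompact Y)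
    (f : (Fin n → ℝ) × (Fin p → ℝ) → ℝ) (hf : Continuous f)
    (h : Fin m → (Fin n → ℝ) × (Fin p → ℝ) → ℝ) (hh : ∀ j, Continuous (h j))
    (K : Set ((Fin n → ℝ) × (Fin p → ℝ)))
    (hKdef : K = {w | w.2 ∈ Y ∧ ∀ j, 0 ≤ h j w}) (hKc : IsCompact K)
    (Ky : (Fin p → ℝ) → Set (Fin n → ℝ))
    (hKy : ∀ y, Ky y = {x | ∀ j, 0 ≤ h j (x, y)})
    (hne : ∀ y ∈ Y, (Ky y).Nonempty)
    (J : (Fin p → ℝ) → ℝ)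
    (hJ : ∀ y, J y = sInf ((fun x => f (x, y)) '' Ky y)) :
    (∃ F : (Fin p → ℝ) → NonemptyCompacts (Fin n → ℝ),
      (∀ y ∈ Y, (F y : Set (Fin n → ℝ)) = Ky y) ∧
      @Measurable _ _ _ (borel (NonemptyCompacts (Fin n → ℝ))) (fun y : Y => F y.1)) ∧
    Measurable (fun y : Y => J y.1) :=
  stmt0_general hKc (fun y hy => by simp [hKdef, hKy, hy]) hne
    hf.continuousOn.lowerSemicontinuousOn fun y _ => hJ y
end

section
/- Suppose Y ⊂ ℝ^p and K are compact. Then there exists a Borel measurable selector g : Y → ℝ^n such that g(y) ∈ K_y and J(y) = f(g(y), y) for every y ∈ Y. -/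
open MeasureTheory Set TopologicalSpace Filter Topology

/-
Call a compact-valued correspondence measurable if it hits every closed set on a measurable set of
parameters. The fibres of `K` over the parameter space form such a correspondence, because
`{y | K_y hits C}` is the projection of a compact set. Measurability survives the passage to the
minimizers of a lower semicontinuous function: the minimum over `K_y ∩ C` equals the minimum over
`K_y` iff every rational sublevel set that meets `K_y` also meets `K_y ∩ C`. Minimizing first `f`
and then, successively, a sequence of continuous functions separating points shrinks each nonempty
fibre to a single point, and a measurable correspondence with at most one value at each parameter is
a measurable function.
-/

section Minimizers

variable {Z : Type*} {φ : Z → ℝ} {S C : Set Z}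

/-- The set of minimizers of `φ` over `S` (the `argmin`), empty if the infimum is not attained. As a
set-valued operation on `S` it can be iterated and applied to correspondences. -/
def minimizers (φ : Z → ℝ) (S : Set Z) : Set Z :=
  {z ∈ S | IsMinOn φ S z}

theorem minimizers_subset (φ : Z → ℝ) (S : Set Z) : minimizers φ S ⊆ S :=
  sep_subset _ _

theorem eq_of_mem_minimizers {z w : Z} (hz : z ∈ minimizers φ S) (hw : w ∈ minimizers φ S) :
    φ z = φ w :=
  le_antisymm (hz.2 hw.1) (hw.2 hz.1)

variable [TopologicalSpace Z]

theorem minimizers_nonempty (hφ : LowerSemicontinuous φ) (hS : IsCompact S) (hne : S.Nonempty) :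
    (minimizers φ S).Nonempty :=
  (hφ.lowerSemicontinuousOn S).exists_isMinOn hne hS

theorem isCompact_minimizers (hφ : LowerSemicontinuous φ) (hS : IsCompact S) :
    IsCompact (minimizers φ S) := by
  have minimizers_eq : minimizers φ S = S ∩ ⋂ w ∈ S, φ ⁻¹' Iic (φ w) := by
    ext z
    simp [minimizers, isMinOn_iff]
  rw [minimizers_eq]
  exact hS.inter_right (isClosed_biInter fun w _ => hφ.isClosed_preimage (φ w))

theorem minimizers_inter_nonempty_iff (hφ : LowerSemicontinuous φ) (hS : IsCompact S)
    (hC : IsClosed C) :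
    (minimizers φ S ∩ C).Nonempty ↔ (S ∩ C).Nonempty ∧
      ∀ q : ℚ, (S ∩ φ ⁻¹' Iic (q : ℝ)).Nonempty → (S ∩ (C ∩ φ ⁻¹' Iic (q : ℝ))).Nonempty := by
  constructor
  · rintro ⟨z, ⟨hzS, hmin⟩, hzC⟩
    refine ⟨⟨z, hzS, hzC⟩, fun q ⟨w, hwS, hwq⟩ => ⟨z, hzS, hzC, ?_⟩⟩
    exact (isMinOn_iff.1 hmin w hwS).trans hwq
  · rintro ⟨hne, hq⟩
    obtain ⟨z, ⟨hzS, hzC⟩, hmin⟩ := minimizers_nonempty hφ (hS.inter_right hC) hne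
    refine ⟨z, ⟨hzS, isMinOn_iff.2 fun w hwS => ?_⟩, hzC⟩
    by_contra! hwz
    obtain ⟨q, hwq, hqz⟩ := exists_rat_btwn hwz
    obtain ⟨v, hvS, hvC, hvq⟩ := hq q ⟨w, hwS, hwq.le⟩
    exact (hqz.trans_le (hmin ⟨hvS, hvC⟩)).not_ge hvq

end Minimizers

theorem iInter_inter_nonempty_iff {ι Z : Type*} [Nonempty ι] [TopologicalSpace Z] [T2Space Z]
    {S : ι → Set Z} (hdir : Directed (· ⊇ ·) S) (hS : ∀ i, IsCompact (S i)) {C : Set Z}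
    (hC : IsClosed C) : ((⋂ i, S i) ∩ C).Nonempty ↔ ∀ i, (S i ∩ C).Nonempty := by
  refine ⟨fun h i => h.mono (inter_subset_inter_left C (iInter_subset S i)), fun h => ?_⟩
  have hSC (i : ι) : IsCompact (S i ∩ C) := (hS i).inter_right hC
  have hdirC : Directed (· ⊇ ·) fun i => S i ∩ C := fun i j =>
    (hdir i j).imp fun _ => And.imp (inter_subset_inter_left C) (inter_subset_inter_left C)
  rw [iInter_inter]
  exact IsCompact.nonempty_iInter_of_directed_nonempty_isCompact_isClosed _ hdirC h hSC
    fun i => (hSC i).isClosed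

section Correspondence

variable {α Z : Type*} [MeasurableSpace α] [TopologicalSpace Z] {F : α → Set Z}

/-- A measurable compact-valued correspondence from `α` to `Z`: the set of parameters at which it
hits a given closed set is measurable. It is the hypothesis under which measurable selections are
constructed. Empty values are allowed, so that no assumption is needed on the range of a projection
whose fibres are considered. -/
structure IsMeasurableCorrespondence (F : α → Set Z) : Prop where
  isCompact (a : α) : IsCompact (F a)
  measurableSet_hit {C : Set Z} (hC : IsClosed C) : MeasurableSet {a | (F a ∩ C).Nonempty}

namespace IsMeasurableCorrespondence

theorem preimage_singleton [CompactSpace Z] [TopologicalSpace α] [T2Space α]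
    [OpensMeasurableSpace α] {π : Z → α} (hπ : Continuous π) :
    IsMeasurableCorrespondence fun a => π ⁻¹' {a} where
  isCompact a := (isClosed_singleton.preimage hπ).isCompact
  measurableSet_hit {C} hC := by
    have hit_eq : {a | (π ⁻¹' {a} ∩ C).Nonempty} = π '' C := by
      ext a
      exact exists_congr fun z => and_comm
    rw [hit_eq]
    exact (hC.isCompact.image hπ).measurableSet

theorem image {X : Type*} [TopologicalSpace X] (hF : IsMeasurableCorrespondence F) {q : Z → X}
    (hq : Continuous q) : IsMeasurableCorrespondence fun a => q '' F a where
  isCompact a := (hF.isCompact a).image hq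
  measurableSet_hit hC := by
    simpa only [image_inter_nonempty_iff] using hF.measurableSet_hit (hC.preimage hq)

protected theorem minimizers (hF : IsMeasurableCorrespondence F) {φ : Z → ℝ}
    (hφ : LowerSemicontinuous φ) :
    IsMeasurableCorrespondence fun a => minimizers φ (F a) where
  isCompact a := isCompact_minimizers hφ (hF.isCompact a)
  measurableSet_hit hC := by
    simp only [minimizers_inter_nonempty_iff hφ (hF.isCompact _) hC]
    have hit_sublevel {D : Set Z} (hD : IsClosed D) (q : ℚ) :
        Measurable fun a => (F a ∩ (D ∩ φ ⁻¹' Iic (q : ℝ))).Nonempty :=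
      measurableSet_setOfPred.1 (hF.measurableSet_hit (hD.inter (hφ.isClosed_preimage q)))
    refine (hF.measurableSet_hit hC).inter (Measurable.setOf (.forall fun q => ?_))
    exact .imp (by simpa only [univ_inter] using hit_sublevel isClosed_univ q) (hit_sublevel hC q)

theorem iInter_of_directed {ι : Type*} [Nonempty ι] [Countable ι] [T2Space Z]
    {F : ι → α → Set Z} (hF : ∀ i, IsMeasurableCorrespondence (F i))
    (hdir : ∀ a, Directed (· ⊇ ·) fun i => F i a) :
    IsMeasurableCorrespondence fun a => ⋂ i, F i a where
  isCompact a :=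
    ((hF (Classical.arbitrary ι)).isCompact a).of_isClosed_subset
      (isClosed_iInter fun i => ((hF i).isCompact a).isClosed) (iInter_subset _ _)
  measurableSet_hit hC := by
    simp only [iInter_inter_nonempty_iff (hdir _) (fun i => (hF i).isCompact _) hC]
    exact Measurable.setOf <| .forall fun i =>
      measurableSet_setOfPred.1 ((hF i).measurableSet_hit hC)

theorem exists_measurable_mem_of_subsingleton [Nonempty Z] [MeasurableSpace Z] [BorelSpace Z]
    (hF : IsMeasurableCorrespondence F) (hsub : ∀ a, (F a).Subsingleton) :
    ∃ g : α → Z, Measurable g ∧ ∀ a, (F a).Nonempty → g a ∈ F a := by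
  classical
  obtain ⟨z₀⟩ := ‹Nonempty Z›
  let g (a : α) : Z := if ha : (F a).Nonempty then ha.some else z₀
  have g_mem {a : α} (ha : (F a).Nonempty) : g a ∈ F a := by
    simpa only [g, dif_pos ha] using ha.some_mem
  refine ⟨g, measurable_of_isClosed fun C hC => ?_, fun a => g_mem⟩
  have preimage_eq : g ⁻¹' C =
      {a | (F a ∩ C).Nonempty} ∪ ({a | (F a ∩ univ).Nonempty}ᶜ ∩ {_a | z₀ ∈ C}) := by
    ext a
    by_cases ha : (F a).Nonempty
    · have hF_eq : F a = {g a} := (hsub a).eq_singleton_of_mem (g_mem ha)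
      simp [hF_eq]
    · simp [g, not_nonempty_iff_eq_empty.1 ha]
  rw [preimage_eq]
  exact (hF.measurableSet_hit hC).union
    ((hF.measurableSet_hit isClosed_univ).compl.inter (.const _))

end IsMeasurableCorrespondence

end Correspondence

section LexMinimizers

variable {Z : Type*} {φ : ℕ → Z → ℝ} {S : Set Z}

/-- The points of `S` that remain after minimizing `φ 0`, then `φ 1` among the minimizers of `φ 0`,
and so on through `φ (k - 1)`; used to select one point of `S` canonically. -/
def lexMinimizers (φ : ℕ → Z → ℝ) (S : Set Z) : ℕ → Set Z
  | 0 => S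
  | k + 1 => minimizers (φ k) (lexMinimizers φ S k)

theorem lexMinimizers_antitone (φ : ℕ → Z → ℝ) (S : Set Z) : Antitone (lexMinimizers φ S) :=
  antitone_nat_of_succ_le fun k => minimizers_subset (φ k) _

theorem subsingleton_iInter_lexMinimizers (hφ : ∀ z w, (∀ k, φ k z = φ k w) → z = w) :
    (⋂ k, lexMinimizers φ S k).Subsingleton := fun z hz w hw =>
  hφ z w fun k => eq_of_mem_minimizers (mem_iInter.1 hz (k + 1)) (mem_iInter.1 hw (k + 1))

variable [TopologicalSpace Z]

theorem isCompact_lexMinimizers (hφ : ∀ k, LowerSemicontinuous (φ k)) (hS : IsCompact S) (k : ℕ) :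
    IsCompact (lexMinimizers φ S k) := by
  induction k with
  | zero => exact hS
  | succ k ih => exact isCompact_minimizers (hφ k) ih

theorem lexMinimizers_nonempty (hφ : ∀ k, LowerSemicontinuous (φ k)) (hS : IsCompact S)
    (hne : S.Nonempty) (k : ℕ) : (lexMinimizers φ S k).Nonempty := by
  induction k with
  | zero => exact hne
  | succ k ih => exact minimizers_nonempty (hφ k) (isCompact_lexMinimizers hφ hS k) ih

theorem iInter_lexMinimizers_nonempty [T2Space Z] (hφ : ∀ k, LowerSemicontinuous (φ k))
    (hS : IsCompact S) (hne : S.Nonempty) : (⋂ k, lexMinimizers φ S k).Nonempty :=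
  IsCompact.nonempty_iInter_of_sequence_nonempty_isCompact_isClosed _
    (fun k => minimizers_subset (φ k) _) (lexMinimizers_nonempty hφ hS hne) hS
    fun k => (isCompact_lexMinimizers hφ hS k).isClosed

protected theorem IsMeasurableCorrespondence.lexMinimizers {α : Type*} [MeasurableSpace α]
    {F : α → Set Z} (hF : IsMeasurableCorrespondence F) (hφ : ∀ k, LowerSemicontinuous (φ k))
    (k : ℕ) :
    IsMeasurableCorrespondence fun a => lexMinimizers φ (F a) k := by
  induction k with
  | zero => exact hF
  | succ k ih => exact ih.minimizers (hφ k)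

end LexMinimizers

section Selection

theorem exists_seq_continuous_separating (X : Type*) [TopologicalSpace X] [MetrizableSpace X]
    [SecondCountableTopology X] :
    ∃ φ : ℕ → X → ℝ, (∀ k, Continuous (φ k)) ∧ ∀ x y, (∀ k, φ k x = φ k y) → x = y := by
  obtain ⟨e, he⟩ := exists_embedding_l_infty X
  refine ⟨fun k x => e x k, fun k => ?_, fun x y hxy => he.injective (DFunLike.ext _ _ hxy)⟩
  exact (continuous_eval_const k).comp he.continuous

variable {X : Type*} [TopologicalSpace X] [MetrizableSpace X] [SecondCountableTopology X]
  [Nonempty X] [MeasurableSpace X] [BorelSpace X]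

theorem IsMeasurableCorrespondence.exists_measurable_mem {α : Type*} [MeasurableSpace α]
    {F : α → Set X} (hF : IsMeasurableCorrespondence F) :
    ∃ g : α → X, Measurable g ∧ ∀ a, (F a).Nonempty → g a ∈ F a := by
  obtain ⟨φ, hφ, hsep⟩ := exists_seq_continuous_separating X
  have hlsc (k : ℕ) : LowerSemicontinuous (φ k) := (hφ k).lowerSemicontinuous
  have hG : IsMeasurableCorrespondence fun a => ⋂ k, lexMinimizers φ (F a) k :=
    .iInter_of_directed (hF.lexMinimizers hlsc) fun a =>
      (lexMinimizers_antitone φ (F a)).directed_ge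
  obtain ⟨g, hg, g_mem⟩ :=
    hG.exists_measurable_mem_of_subsingleton fun a => subsingleton_iInter_lexMinimizers hsep
  refine ⟨g, hg, fun a ha => ?_⟩
  exact mem_iInter.1 (g_mem a (iInter_lexMinimizers_nonempty hlsc (hF.isCompact a) ha)) 0

variable {T : Type*} [TopologicalSpace T] [T2Space T] [MeasurableSpace T] [OpensMeasurableSpace T]

theorem exists_measurable_isMinOn_fiber {K : Set (X × T)} (hK : IsCompact K) {f : X × T → ℝ}
    (hf : LowerSemicontinuousOn f K) :
    ∃ g : T → X, Measurable g ∧ ∀ y, {x | (x, y) ∈ K}.Nonempty →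
      (g y, y) ∈ K ∧ IsMinOn (fun x => f (x, y)) {x | (x, y) ∈ K} (g y) := by
  have : CompactSpace K := isCompact_iff_compactSpace.1 hK
  have hfK : LowerSemicontinuous (K.domRestrict f) := lowerSemicontinuous_restrict_iff.2 hf
  have hfiber : IsMeasurableCorrespondence fun y => (fun w : K => w.1.2) ⁻¹' {y} :=
    .preimage_singleton (by fun_prop)
  obtain ⟨g, hg, g_mem⟩ := ((hfiber.minimizers hfK).image (q := fun w : K => w.1.1)
    (by fun_prop)).exists_measurable_mem
  refine ⟨g, hg, fun y ⟨x, hx⟩ => ?_⟩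
  have hne : (minimizers (K.domRestrict f) ((fun w : K => w.1.2) ⁻¹' {y})).Nonempty :=
    minimizers_nonempty hfK (hfiber.isCompact y) ⟨⟨(x, y), hx⟩, rfl⟩
  obtain ⟨⟨⟨x', y'⟩, hw⟩, ⟨rfl : y' = y, hmin⟩, hgy : x' = g y'⟩ := g_mem y (hne.image _)
  rw [← hgy]
  exact ⟨hw, isMinOn_iff.2 fun v hv => isMinOn_iff.1 hmin ⟨(v, y'), hv⟩ rfl⟩

theorem stmt1_general {K : Set (X × T)} (hK : IsCompact K) {f : X × T → ℝ}
    (hf : LowerSemicontinuousOn f K) {Y : Set T} {Ky : T → Set X}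
    (hKy : ∀ y ∈ Y, Ky y = {x | (x, y) ∈ K}) (hne : ∀ y ∈ Y, (Ky y).Nonempty) {J : T → ℝ}
    (hJ : ∀ y ∈ Y, J y = sInf ((fun x => f (x, y)) '' Ky y)) :
    ∃ g : T → X, Measurable g ∧ ∀ y ∈ Y, g y ∈ Ky y ∧ J y = f (g y, y) := by
  obtain ⟨g, hg, hgmin⟩ := exists_measurable_isMinOn_fiber hK hf
  refine ⟨g, hg, fun y hy => ?_⟩
  obtain ⟨g_mem, hmin⟩ := hgmin y (hKy y hy ▸ hne y hy)
  rw [hJ y hy, hKy y hy]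
  have hleast : IsLeast ((fun x => f (x, y)) '' {x | (x, y) ∈ K}) (f (g y, y)) :=
    ⟨mem_image_of_mem _ g_mem, forall_mem_image.2 (isMinOn_iff.1 hmin)⟩
  exact ⟨g_mem, hleast.csInf_eq⟩

end Selection

/-- existence of a Borel measurable selector `g : Y → ℝ^n` with
`g y ∈ K_y` and `J y = f (g y, y)` for every `y ∈ Y`. -/
theorem stmt1 (n p m : ℕ)
    (Y : Set (Fin p → ℝ)) (hYc : IsCompact Y)
    (f : (Fin n → ℝ) × (Fin p → ℝ) → ℝ) (hf : Continuous f)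
    (h : Fin m → (Fin n → ℝ) × (Fin p → ℝ) → ℝ) (hh : ∀ j, Continuous (h j))
    (K : Set ((Fin n → ℝ) × (Fin p → ℝ)))
    (hKdef : K = {w | w.2 ∈ Y ∧ ∀ j, 0 ≤ h j w}) (hKc : IsCompact K)
    (Ky : (Fin p → ℝ) → Set (Fin n → ℝ))
    (hKy : ∀ y, Ky y = {x | ∀ j, 0 ≤ h j (x, y)})
    (hne : ∀ y ∈ Y, (Ky y).Nonempty)
    (J : (Fin p → ℝ) → ℝ)
    (hJ : ∀ y, J y = sInf ((fun x => f (x, y)) '' Ky y)) :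
    ∃ g : (Fin p → ℝ) → (Fin n → ℝ),
      Measurable (fun y : Y => g y.1) ∧
      ∀ y ∈ Y, g y ∈ Ky y ∧ J y = f (g y, y) := by
  obtain ⟨g, hg, hgmin⟩ := stmt1_general hKc (hf.lowerSemicontinuous.lowerSemicontinuousOn K)
    (fun y hy => by simp [hKy, hKdef, hy]) hne fun y _ => hJ y
  exact ⟨g, hg.comp measurable_subtype_coe, hgmin⟩
end

section
/- Suppose Y ⊂ ℝ^p and K are compact and K_y is nonempty for every y ∈ Y. Then ρ = ∫_Y J(y) dφ(y), and the infimum defining ρ is attained: there exists a finite Borel measure μ* on K with marginal φ on ℝ^p such that ∫_K f dμ* = ρ. -/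
open MeasureTheory Set TopologicalSpace Filter Topology

/-! For a compact set `K` and continuous `π`, `f`, let `J` be the infimum of `f` over the fibres of
`π` in `K`. The sets `π (K ∩ {f ≤ t})` are compact, so `J` is Borel. Every `μ` on `K` with
`π`-marginal `φ` satisfies `∫ f dμ ≥ ∫ J ∘ π dμ = ∫ J dφ`, because `f ≥ J ∘ π` on `K`. Equality
holds for the image of `φ` under a Borel map that chooses a minimizer in each fibre.

Such a map is a Borel section of `(f, π)` on `K`, evaluated at `(J z, z)`. To obtain Borel sections,
parametrize `K` by the Cantor space; this embeds in `ℝ`, and the least point of each fibre, being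
again a fibrewise infimum, depends on `z` in a Borel way. -/

section FiberInf

variable {X Z : Type*} {K : Set X} {f : X → ℝ} {π : X → Z} {z : Z}

/-- The value function of minimizing `f` over the fibres of `π` in `K`, which agrees on `Y` with
the function `J` of `stmt2` when `π` is the projection `(x, y) ↦ y`. Outside `π '' K` it is `0`,
because `sInf ∅ = 0`. -/
noncomputable def fiberInf (f : X → ℝ) (π : X → Z) (K : Set X) (z : Z) : ℝ :=
  sInf (f '' (K ∩ π ⁻¹' {z}))

lemma fiberInf_of_notMem (hz : z ∉ π '' K) : fiberInf f π K z = 0 := by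
  have hfiber : K ∩ π ⁻¹' {z} = ∅ :=
    eq_empty_of_forall_notMem fun x hx => hz ⟨x, hx.1, hx.2⟩
  rw [fiberInf, hfiber, image_empty, Real.sInf_empty]

variable [TopologicalSpace X] [TopologicalSpace Z]

lemma isCompact_inter_preimage_of_isClosed (hK : IsCompact K) (hπ : ContinuousOn π K)
    {C : Set Z} (hC : IsClosed C) : IsCompact (K ∩ π ⁻¹' C) := by
  obtain ⟨u, hu, huC⟩ := continuousOn_iff_isClosed.1 hπ C hC
  rw [inter_comm, huC, inter_comm]
  exact hK.inter_right hu

lemma isLeast_fiberInf [T1Space Z] (hK : IsCompact K) (hf : LowerSemicontinuousOn f K)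
    (hπ : ContinuousOn π K) (hz : z ∈ π '' K) :
    IsLeast (f '' (K ∩ π ⁻¹' {z})) (fiberInf f π K z) := by
  obtain ⟨x₀, hx₀, hx₀z⟩ := hz
  obtain ⟨x, hx, hmin⟩ := LowerSemicontinuousOn.exists_isMinOn (s := K ∩ π ⁻¹' {z}) ⟨x₀, hx₀, hx₀z⟩
    (isCompact_inter_preimage_of_isClosed hK hπ isClosed_singleton) (hf.mono inter_subset_left)
  have hleast : IsLeast (f '' (K ∩ π ⁻¹' {z})) (f x) :=
    ⟨mem_image_of_mem f hx, forall_mem_image.2 fun _ hx' => hmin hx'⟩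
  rwa [fiberInf, hleast.csInf_eq]

lemma exists_eq_fiberInf [T1Space Z] (hK : IsCompact K) (hf : LowerSemicontinuousOn f K)
    (hπ : ContinuousOn π K) (hz : z ∈ π '' K) :
    ∃ x ∈ K, π x = z ∧ f x = fiberInf f π K z := by
  obtain ⟨x, ⟨hxK, hxz⟩, hfx⟩ := (isLeast_fiberInf hK hf hπ hz).1
  exact ⟨x, hxK, hxz, hfx⟩

lemma fiberInf_le [T1Space Z] (hK : IsCompact K) (hf : LowerSemicontinuousOn f K)
    (hπ : ContinuousOn π K) {x : X} (hx : x ∈ K) : fiberInf f π K (π x) ≤ f x :=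
  (isLeast_fiberInf hK hf hπ (mem_image_of_mem π hx)).2 ⟨x, ⟨hx, rfl⟩, rfl⟩

lemma preimage_Iic_fiberInf [T1Space Z] (hK : IsCompact K) (hf : LowerSemicontinuousOn f K)
    (hπ : ContinuousOn π K) (t : ℝ) :
    fiberInf f π K ⁻¹' Iic t = π '' (K ∩ f ⁻¹' Iic t) ∪ ((π '' K)ᶜ ∩ {_z | 0 ≤ t}) := by
  ext z
  by_cases hz : z ∈ π '' K
  · simp only [mem_union, mem_inter_iff, mem_compl_iff, hz, not_true_eq_false, false_and, or_false]
    constructor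
    · intro hle
      obtain ⟨x, hxK, hxz, hfx⟩ := exists_eq_fiberInf hK hf hπ hz
      exact ⟨x, ⟨hxK, hfx.trans_le hle⟩, hxz⟩
    · rintro ⟨x, ⟨hxK, hfx⟩, rfl⟩
      exact (fiberInf_le hK hf hπ hxK).trans hfx
  · have hz' : z ∉ π '' (K ∩ f ⁻¹' Iic t) := fun h => hz (image_mono inter_subset_left h)
    simp [hz, hz', fiberInf_of_notMem]

lemma measurable_fiberInf [T2Space Z] [MeasurableSpace Z] [OpensMeasurableSpace Z]
    (hK : IsCompact K) (hf : LowerSemicontinuousOn f K) (hπ : ContinuousOn π K) :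
    Measurable (fiberInf f π K) := by
  refine measurable_of_Iic fun t => ?_
  rw [preimage_Iic_fiberInf hK hf hπ]
  have hsub : IsCompact (π '' (K ∩ f ⁻¹' Iic t)) :=
    (hf.isCompact_inter_preimage_Iic hK t).image_of_continuousOn (hπ.mono inter_subset_left)
  exact hsub.measurableSet.union
    ((hK.image_of_continuousOn hπ).measurableSet.compl.inter (.const _))

lemma exists_bound_fiberInf [T1Space Z] (hK : IsCompact K) (hf : ContinuousOn f K)
    (hπ : ContinuousOn π K) : ∃ B, ∀ z, ‖fiberInf f π K z‖ ≤ B := by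
  obtain ⟨B, hB⟩ := hK.exists_bound_of_continuousOn hf
  refine ⟨max B 0, fun z => ?_⟩
  by_cases hz : z ∈ π '' K
  · obtain ⟨x, hxK, -, hfx⟩ := exists_eq_fiberInf hK hf.lowerSemicontinuousOn hπ hz
    exact hfx ▸ (hB x hxK).trans (le_max_left B 0)
  · simp [fiberInf_of_notMem hz]

lemma integrable_fiberInf [T2Space Z] [MeasurableSpace Z] [OpensMeasurableSpace Z]
    (hK : IsCompact K) (hf : ContinuousOn f K) (hπ : ContinuousOn π K)
    (φ : Measure Z) [IsFiniteMeasure φ] : Integrable (fiberInf f π K) φ := by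
  obtain ⟨B, hB⟩ := exists_bound_fiberInf hK hf hπ
  exact .of_bound (measurable_fiberInf hK hf.lowerSemicontinuousOn hπ).aestronglyMeasurable B
    (.of_forall hB)

end FiberInf

section MeasurableSection

lemma exists_continuous_nat_bool_range_eq {X : Type*} [TopologicalSpace X] [MetrizableSpace X]
    {K : Set X} (hK : IsCompact K) (hne : K.Nonempty) :
    ∃ σ : (ℕ → Bool) → X, Continuous σ ∧ range σ = K := by
  let := metrizableSpaceMetric X
  have := isCompact_iff_compactSpace.1 hK
  have := hne.to_subtype
  obtain ⟨σ, hσ, hsurj⟩ := exists_nat_bool_continuous_surjective_of_compact K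
  exact ⟨(↑) ∘ σ, continuous_subtype_val.comp hσ, by rw [hsurj.range_comp, Subtype.range_coe]⟩

lemma exists_isClosedEmbedding_nat_bool_real : ∃ e : (ℕ → Bool) → ℝ, IsClosedEmbedding e :=
  ⟨_, isClosed_cantorSet.isClosedEmbedding_subtypeVal.comp
    cantorSetHomeomorphNatToBool.symm.isClosedEmbedding⟩

variable {X Z : Type*} [TopologicalSpace X] [MetrizableSpace X] [MeasurableSpace X] [BorelSpace X]
  [TopologicalSpace Z] [T2Space Z] [MeasurableSpace Z] [OpensMeasurableSpace Z] {K : Set X}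

lemma exists_measurable_section (hK : IsCompact K) (hne : K.Nonempty) {g : X → Z}
    (hg : ContinuousOn g K) :
    ∃ s : Z → X, Measurable s ∧ ∀ z ∈ g '' K, s z ∈ K ∧ g (s z) = z := by
  obtain ⟨σ, hσ, rfl⟩ := exists_continuous_nat_bool_range_eq hK hne
  obtain ⟨e, he⟩ := exists_isClosedEmbedding_nat_bool_real
  obtain ⟨τ, hτ, hτe⟩ :=
    he.measurableEmbedding.exists_measurable_extend hσ.measurable fun _ => hne.to_type
  have hgσ : ContinuousOn (g ∘ σ) univ := (hg.comp_continuous hσ mem_range_self).continuousOn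
  have hlsc : LowerSemicontinuousOn e univ := he.continuous.continuousOn.lowerSemicontinuousOn
  refine ⟨τ ∘ fiberInf e (g ∘ σ) univ,
    hτ.comp (measurable_fiberInf isCompact_univ hlsc hgσ), ?_⟩
  rintro _ ⟨_, ⟨c, rfl⟩, rfl⟩
  obtain ⟨d, -, hd, hed⟩ := exists_eq_fiberInf isCompact_univ hlsc hgσ
    (mem_image_of_mem (g ∘ σ) (mem_univ c))
  have hτd : τ (fiberInf e (g ∘ σ) univ ((g ∘ σ) c)) = σ d := by
    rw [← hed]
    exact congrFun hτe d
  exact ⟨⟨d, hτd.symm⟩, (congrArg g hτd).trans hd⟩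

lemma exists_measurable_fiber_minimizer (hK : IsCompact K) (hne : K.Nonempty) {f : X → ℝ}
    (hf : ContinuousOn f K) {π : X → Z} (hπ : ContinuousOn π K) :
    ∃ s : Z → X, Measurable s ∧
      ∀ z ∈ π '' K, s z ∈ K ∧ π (s z) = z ∧ f (s z) = fiberInf f π K z := by
  obtain ⟨s, hs, hsec⟩ := exists_measurable_section hK hne (hf.prodMk hπ)
  refine ⟨fun z => s (fiberInf f π K z, z), hs.comp
    ((measurable_fiberInf hK hf.lowerSemicontinuousOn hπ).prodMk measurable_id), fun z hz => ?_⟩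
  obtain ⟨x, hxK, hxz, hfx⟩ := exists_eq_fiberInf hK hf.lowerSemicontinuousOn hπ hz
  obtain ⟨hsK, hs_eq⟩ := hsec (fiberInf f π K z, z) ⟨x, hxK, Prod.ext hfx hxz⟩
  exact ⟨hsK, congrArg Prod.snd hs_eq, congrArg Prod.fst hs_eq⟩

end MeasurableSection

section Marginal

variable {X Z : Type*} [TopologicalSpace X] [MetrizableSpace X] [MeasurableSpace X] [BorelSpace X]
  [TopologicalSpace Z] [T2Space Z] [MeasurableSpace Z] [BorelSpace Z]
  {K : Set X} {f : X → ℝ} {π : X → Z}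

lemma integral_map_fiberInf_le (hK : IsCompact K) (hf : ContinuousOn f K) (hπ : Continuous π)
    {μ : Measure X} [IsFiniteMeasure μ] (hμK : μ Kᶜ = 0) :
    ∫ z, fiberInf f π K z ∂(μ.map π) ≤ ∫ x in K, f x ∂μ := by
  have hJ : Integrable (fiberInf f π K) (μ.map π) :=
    integrable_fiberInf hK hf hπ.continuousOn _
  calc ∫ z, fiberInf f π K z ∂(μ.map π)
      = ∫ x, fiberInf f π K (π x) ∂μ :=
        integral_map hπ.measurable.aemeasurable hJ.aestronglyMeasurable
    _ = ∫ x in K, fiberInf f π K (π x) ∂μ := by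
        rw [Measure.restrict_eq_self_of_ae_mem (mem_ae_iff.2 hμK)]
    _ ≤ ∫ x in K, f x ∂μ :=
        setIntegral_mono_on (hJ.comp_measurable hπ.measurable).integrableOn
          (hf.integrableOn_compact hK) hK.measurableSet fun _ hx =>
            fiberInf_le hK hf.lowerSemicontinuousOn hπ.continuousOn hx

lemma exists_map_eq_setIntegral_eq_integral_fiberInf (hK : IsCompact K) (hf : ContinuousOn f K)
    (hπ : Continuous π) (φ : Measure Z) [IsFiniteMeasure φ] (hφ : φ (π '' K)ᶜ = 0) :
    ∃ μ : Measure X, IsFiniteMeasure μ ∧ μ Kᶜ = 0 ∧ μ.map π = φ ∧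
      ∫ x in K, f x ∂μ = ∫ z, fiberInf f π K z ∂φ := by
  obtain rfl | hne := K.eq_empty_or_nonempty
  · obtain rfl : φ = 0 := by simpa using hφ
    exact ⟨0, inferInstance, by simp⟩
  obtain ⟨s, hs, hmin⟩ := exists_measurable_fiber_minimizer hK hne hf hπ.continuousOn
  have hmin_ae : ∀ᵐ z ∂φ, s z ∈ K ∧ π (s z) = z ∧ f (s z) = fiberInf f π K z :=
    mem_of_superset (mem_ae_iff.2 hφ) hmin
  have hsK : ∀ᵐ x ∂(φ.map s), x ∈ K :=
    (ae_map_iff hs.aemeasurable hK.measurableSet).2 (hmin_ae.mono fun _ h => h.1)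
  have hrestrict : (φ.map s).restrict K = φ.map s := Measure.restrict_eq_self_of_ae_mem hsK
  have hfm : AEStronglyMeasurable f (φ.map s) :=
    hrestrict ▸ (hf.integrableOn_compact hK).aestronglyMeasurable
  refine ⟨φ.map s, inferInstance, hsK, ?_, ?_⟩
  · rw [Measure.map_map hπ.measurable hs,
      Measure.map_congr (f := π ∘ s) (g := id) (hmin_ae.mono fun _ h => h.2.1), Measure.map_id]
  · rw [hrestrict, integral_map hs.aemeasurable hfm]
    exact integral_congr_ae (hmin_ae.mono fun _ h => h.2.2)

theorem stmt2_general (hK : IsCompact K) (hf : ContinuousOn f K) (hπ : Continuous π)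
    {Y : Set Z} (hY : π '' K = Y) {J : Z → ℝ} (hJ : ∀ z ∈ Y, J z = fiberInf f π K z)
    (φ : Measure Z) [IsFiniteMeasure φ] (hφY : φ Yᶜ = 0) {ρ : ℝ}
    (hρ : ρ = sInf {r | ∃ μ : Measure X,
      IsFiniteMeasure μ ∧ μ Kᶜ = 0 ∧ μ.map π = φ ∧ r = ∫ x in K, f x ∂μ}) :
    ρ = ∫ z in Y, J z ∂φ ∧
    ∃ μ : Measure X, IsFiniteMeasure μ ∧ μ Kᶜ = 0 ∧ μ.map π = φ ∧ ∫ x in K, f x ∂μ = ρ := by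
  subst hY
  obtain ⟨μ, hμ, hμK, hμφ, hμf⟩ :=
    exists_map_eq_setIntegral_eq_integral_fiberInf hK hf hπ φ hφY
  have hρ_eq : ρ = ∫ z, fiberInf f π K z ∂φ := by
    rw [hρ]
    refine IsLeast.csInf_eq ⟨⟨μ, hμ, hμK, hμφ, hμf.symm⟩, ?_⟩
    rintro _ ⟨ν, hν, hνK, rfl, rfl⟩
    exact integral_map_fiberInf_le hK hf hπ hνK
  have hJ_eq : ∫ z in π '' K, J z ∂φ = ∫ z, fiberInf f π K z ∂φ := by
    rw [setIntegral_congr_fun (hK.image hπ).measurableSet hJ,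
      Measure.restrict_eq_self_of_ae_mem (s := π '' K) (mem_ae_iff.2 hφY)]
  exact ⟨hρ_eq.trans hJ_eq.symm, μ, hμ, hμK, hμφ, hμf.trans hρ_eq.symm⟩

end Marginal

section Product

variable {X Z : Type*} {K : Set (X × Z)} {Y : Set Z} {S : Z → Set X}

lemma image_snd_eq_of_mem_iff (hK : ∀ x z, (x, z) ∈ K ↔ z ∈ Y ∧ x ∈ S z)
    (hS : ∀ z ∈ Y, (S z).Nonempty) : Prod.snd '' K = Y := by
  ext z
  constructor
  · rintro ⟨⟨x, z⟩, hxz, rfl⟩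
    exact ((hK x z).1 hxz).1
  · intro hz
    obtain ⟨x, hx⟩ := hS z hz
    exact ⟨(x, z), (hK x z).2 ⟨hz, hx⟩, rfl⟩

lemma fiberInf_snd_of_mem_iff (hK : ∀ x z, (x, z) ∈ K ↔ z ∈ Y ∧ x ∈ S z) (f : X × Z → ℝ) {z : Z}
    (hz : z ∈ Y) : fiberInf f Prod.snd K z = sInf ((fun x => f (x, z)) '' S z) := by
  have hfiber : K ∩ Prod.snd ⁻¹' {z} = (fun x => (x, z)) '' S z := by
    ext ⟨x, z'⟩
    simp only [mem_inter_iff, hK, mem_preimage, mem_singleton_iff, mem_image, Prod.mk.injEq]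
    grind
  rw [fiberInf, hfiber, image_image]

end Product

/-- `ρ = ∫_Y J dφ` and the infimum defining `ρ` is attained. -/
theorem stmt2 (n p m : ℕ)
    (Y : Set (Fin p → ℝ)) (hYc : IsCompact Y)
    (f : (Fin n → ℝ) × (Fin p → ℝ) → ℝ) (hf : Continuous f)
    (h : Fin m → (Fin n → ℝ) × (Fin p → ℝ) → ℝ) (hh : ∀ j, Continuous (h j))
    (K : Set ((Fin n → ℝ) × (Fin p → ℝ)))
    (hKdef : K = {w | w.2 ∈ Y ∧ ∀ j, 0 ≤ h j w}) (hKc : IsCompact K)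
    (Ky : (Fin p → ℝ) → Set (Fin n → ℝ))
    (hKy : ∀ y, Ky y = {x | ∀ j, 0 ≤ h j (x, y)})
    (hne : ∀ y ∈ Y, (Ky y).Nonempty)
    (J : (Fin p → ℝ) → ℝ)
    (hJ : ∀ y, J y = sInf ((fun x => f (x, y)) '' Ky y))
    (φ : Measure (Fin p → ℝ)) [IsProbabilityMeasure φ] (hφY : φ Yᶜ = 0)
    (ρ : ℝ)
    (hρ : ρ = sInf {r | ∃ μ : Measure ((Fin n → ℝ) × (Fin p → ℝ)),
      IsFiniteMeasure μ ∧ μ Kᶜ = 0 ∧ μ.map Prod.snd = φ ∧ r = ∫ w in K, f w ∂μ}) :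
    ρ = ∫ y in Y, J y ∂φ ∧
    ∃ μ : Measure ((Fin n → ℝ) × (Fin p → ℝ)),
      IsFiniteMeasure μ ∧ μ Kᶜ = 0 ∧ μ.map Prod.snd = φ ∧ ∫ w in K, f w ∂μ = ρ := by
  have hmem : ∀ x y, (x, y) ∈ K ↔ y ∈ Y ∧ x ∈ Ky y := fun x y => by rw [hKdef, hKy]; rfl
  exact stmt2_general hKc hf.continuousOn continuous_snd (image_snd_eq_of_mem_iff hmem hne)
    (fun y hy => (hJ y).trans (fiberInf_snd_of_mem_iff hmem f hy).symm) φ hφY hρ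
end

section
/- Suppose Y ⊂ ℝ^p and K are compact, K_y is nonempty for every y ∈ Y, and for φ-almost all y ∈ Y the set X*_y is a singleton {x*(y)}. Then there exists a Borel measurable mapping g : Y → ℝ^n with g(y) ∈ K_y for all y, g(y) = x*(y) for φ-almost every y ∈ Y, ρ = ∫_Y f(g(y), y) dφ(y), and for every measure μ* attaining ρ and every α ∈ ℕ^n, β ∈ ℕ^p one has ∫_K x^α y^β dμ*(x,y) = ∫_Y y^β g(y)^α dφ(y). -/
open MeasureTheory Set TopologicalSpace Filter Topology

/-!
Minimizing `f (·, y)` for each `y` separately gives a measurable selection `g` of the minimizers,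
and transporting `φ` to the graph of `g` gives a feasible measure of cost `∫ f (g y, y) dφ`. Any
feasible `μ` has at least this cost, because `f w ≥ f (g w.2, w.2)` on `K`, and equality forces
`w.1` to be a minimizer for `μ`-almost every `w`; if minimizers are unique then `w.1 = g w.2`, so
`μ` is the transported measure and all its moments are known.

To select measurably, write the relevant part of the `x`-space as a continuous image of the Cantor
set. Then `x` may be assumed to be real, and the least minimizer depends measurably on `y`.
-/

section ParametricMinimization

variable {E P γ : Type*}

/-- The value function `J` of the parametric problem of minimizing `u (·, y)` over the section of
`D` at `y`. It takes the junk value `sInf ∅` where that section is empty. -/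
noncomputable def optimalValue [InfSet γ] (u : E × P → γ) (D : Set (E × P)) (y : P) : γ :=
  sInf ((fun x => u (x, y)) '' {x | (x, y) ∈ D})

/-- The graph of the multifunction sending `y` to the set `X*_y` of minimizers of `u (·, y)` over
the section of `D` at `y`. -/
def argminGraph [InfSet γ] (u : E × P → γ) (D : Set (E × P)) : Set (E × P) :=
  {w ∈ D | u w = optimalValue u D w.2}

theorem argminGraph_subset [InfSet γ] (u : E × P → γ) (D : Set (E × P)) : argminGraph u D ⊆ D :=
  sep_subset _ _

theorem optimalValue_of_notMem [InfSet γ] {u : E × P → γ} {D : Set (E × P)} {y : P}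
    (hy : y ∉ Prod.snd '' D) : optimalValue u D y = sInf ∅ := by
  have hempty : {x | (x, y) ∈ D} = ∅ :=
    eq_empty_of_forall_notMem fun x hx => hy ⟨(x, y), hx, rfl⟩
  rw [optimalValue, hempty, image_empty]

theorem optimalValue_comp_prodMap [InfSet γ] {T : Type*} (c : T → E) (u : E × P → γ)
    (D : Set (T × P)) :
    optimalValue (u ∘ Prod.map c id) D = optimalValue u (Prod.map c id '' D) := by
  ext y
  simp only [optimalValue]
  congr 1
  ext r
  simp

theorem prodMap_mem_argminGraph [InfSet γ] {T : Type*} {c : T → E} {u : E × P → γ}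
    {D : Set (T × P)} {w : T × P} (hw : w ∈ argminGraph (u ∘ Prod.map c id) D) :
    Prod.map c id w ∈ argminGraph u (Prod.map c id '' D) :=
  ⟨mem_image_of_mem _ hw.1, hw.2.trans (congrFun (optimalValue_comp_prodMap c u D) w.2)⟩

/-- `D` is the graph of a measurable compact-valued multifunction from `P` to `E`. Measurability is
expressed by closed subsets of the product rather than of `E`, so that it can be applied to
sublevel sets of functions on `D`. -/
structure IsMeasurableCompactGraph [TopologicalSpace E] [TopologicalSpace P] [MeasurableSpace P]
    (D : Set (E × P)) : Prop where
  isCompact_section : ∀ y, IsCompact {x | (x, y) ∈ D}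
  measurableSet_snd_image : ∀ F, IsClosed F → MeasurableSet (Prod.snd '' (D ∩ F))

namespace IsMeasurableCompactGraph

variable [TopologicalSpace E] [TopologicalSpace P] [MeasurableSpace P] {D : Set (E × P)}

theorem of_isCompact [T2Space P] [OpensMeasurableSpace P] (hD : IsCompact D) :
    IsMeasurableCompactGraph D where
  isCompact_section y := by
    have hsection : {x | (x, y) ∈ D} = Prod.fst '' (D ∩ Prod.snd ⁻¹' {y}) := by
      ext x
      simp
    rw [hsection]
    exact (hD.inter_right (isClosed_singleton.preimage continuous_snd)).image continuous_fst
  measurableSet_snd_image _ hF := ((hD.inter_right hF).image continuous_snd).measurableSet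

theorem inter_isClosed (hD : IsMeasurableCompactGraph D) {F : Set (E × P)} (hF : IsClosed F) :
    IsMeasurableCompactGraph (D ∩ F) where
  isCompact_section y :=
    (hD.isCompact_section y).inter_right (hF.preimage (Continuous.prodMk_left y))
  measurableSet_snd_image F' hF' := by
    rw [inter_assoc]
    exact hD.measurableSet_snd_image _ (hF.inter hF')

theorem inter_preimage_Iic [LinearOrder γ] {u : E × P → γ} (hD : IsMeasurableCompactGraph D)
    (hu : LowerSemicontinuousOn u D) (a : γ) : IsMeasurableCompactGraph (D ∩ u ⁻¹' Iic a) := by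
  obtain ⟨F, hF, hFeq⟩ := lowerSemicontinuousOn_iff_preimage_Iic.1 hu a
  exact hFeq ▸ hD.inter_isClosed hF

variable [ConditionallyCompleteLinearOrder γ] {u : E × P → γ}

theorem isLeast_optimalValue (hD : IsMeasurableCompactGraph D) (hu : LowerSemicontinuousOn u D)
    {y : P} (hy : y ∈ Prod.snd '' D) :
    IsLeast ((fun x => u (x, y)) '' {x | (x, y) ∈ D}) (optimalValue u D y) := by
  have hne : {x | (x, y) ∈ D}.Nonempty := by
    obtain ⟨⟨x, _⟩, hx, rfl⟩ := hy
    exact ⟨x, hx⟩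
  obtain ⟨x, hx, hmin⟩ := LowerSemicontinuousOn.exists_isMinOn hne (hD.isCompact_section y)
    (hu.comp (Continuous.prodMk_left y).continuousOn fun _ hx => hx)
  have hleast : IsLeast ((fun x => u (x, y)) '' {x | (x, y) ∈ D}) (u (x, y)) :=
    ⟨mem_image_of_mem _ hx, forall_mem_image.2 fun _ hx' => hmin hx'⟩
  rwa [optimalValue, hleast.csInf_eq]

theorem optimalValue_le (hD : IsMeasurableCompactGraph D) (hu : LowerSemicontinuousOn u D)
    {w : E × P} (hw : w ∈ D) : optimalValue u D w.2 ≤ u w :=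
  (hD.isLeast_optimalValue hu ⟨w, hw, rfl⟩).2 ⟨w.1, hw, rfl⟩

theorem snd_image_argminGraph (hD : IsMeasurableCompactGraph D) (hu : LowerSemicontinuousOn u D) :
    Prod.snd '' argminGraph u D = Prod.snd '' D := by
  refine (image_mono (argminGraph_subset u D)).antisymm fun y hy => ?_
  obtain ⟨x, hx, hxy⟩ := (hD.isLeast_optimalValue hu hy).1
  exact ⟨(x, y), ⟨hx, hxy⟩, rfl⟩

theorem optimalValue_le_iff (hD : IsMeasurableCompactGraph D) (hu : LowerSemicontinuousOn u D)
    {y : P} (hy : y ∈ Prod.snd '' D) {a : γ} :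
    optimalValue u D y ≤ a ↔ y ∈ Prod.snd '' (D ∩ u ⁻¹' Iic a) := by
  constructor
  · intro hle
    obtain ⟨x, hx, hxy⟩ := (hD.isLeast_optimalValue hu hy).1
    exact ⟨(x, y), ⟨hx, hxy.trans_le hle⟩, rfl⟩
  · rintro ⟨w, ⟨hw, hwa⟩, rfl⟩
    exact (hD.optimalValue_le hu hw).trans hwa

theorem measurable_optimalValue [TopologicalSpace γ] [OrderTopology γ] [SecondCountableTopology γ]
    [MeasurableSpace γ] [BorelSpace γ] (hD : IsMeasurableCompactGraph D)
    (hu : LowerSemicontinuousOn u D) : Measurable (optimalValue u D) := by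
  refine measurable_of_Iic fun a => ?_
  have hdom : MeasurableSet (Prod.snd '' D) := by
    simpa only [inter_univ] using hD.measurableSet_snd_image univ isClosed_univ
  have hsub : MeasurableSet (Prod.snd '' (D ∩ u ⁻¹' Iic a)) := by
    simpa only [inter_univ] using
      (hD.inter_preimage_Iic hu a).measurableSet_snd_image univ isClosed_univ
  have hpre : optimalValue u D ⁻¹' Iic a =
      (Prod.snd '' D).ite (Prod.snd '' (D ∩ u ⁻¹' Iic a)) {_y | sInf ∅ ≤ a} := by
    ext y
    by_cases hy : y ∈ Prod.snd '' D
    · simp only [Set.ite, mem_union, mem_inter_iff, Set.mem_sdiff, hy, mem_preimage, mem_Iic,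
        hD.optimalValue_le_iff hu hy, and_true, not_true_eq_false, and_false, or_false]
    · simp only [Set.ite, mem_union, mem_inter_iff, Set.mem_sdiff, hy, mem_preimage, mem_Iic,
        optimalValue_of_notMem hy, and_false, not_false_eq_true, and_true, false_or,
        mem_ofPred_eq]
  rw [hpre]
  exact hdom.ite hsub (MeasurableSet.const _)

theorem snd_image_argminGraph_inter (hD : IsMeasurableCompactGraph D)
    (hu : LowerSemicontinuousOn u D) {F : Set (E × P)} (hF : IsClosed F) :
    Prod.snd '' (argminGraph u D ∩ F) =
      Prod.snd '' (D ∩ F) ∩ {y | optimalValue u (D ∩ F) y ≤ optimalValue u D y} := by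
  have hDF := hD.inter_isClosed hF
  have huF := hu.mono (inter_subset_left (t := F))
  ext y
  constructor
  · rintro ⟨w, ⟨⟨hwD, hw⟩, hwF⟩, rfl⟩
    exact ⟨⟨w, ⟨hwD, hwF⟩, rfl⟩, (hDF.optimalValue_le huF ⟨hwD, hwF⟩).trans_eq hw⟩
  · rintro ⟨hy, hle⟩
    obtain ⟨x, ⟨hxD, hxF⟩, hxy⟩ := (hDF.isLeast_optimalValue huF hy).1
    exact ⟨(x, y), ⟨⟨hxD, (hxy.trans_le hle).antisymm (hD.optimalValue_le hu hxD)⟩, hxF⟩, rfl⟩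

theorem argminGraph [TopologicalSpace γ] [OrderTopology γ] [SecondCountableTopology γ]
    [MeasurableSpace γ] [BorelSpace γ] (hD : IsMeasurableCompactGraph D)
    (hu : LowerSemicontinuousOn u D) : IsMeasurableCompactGraph (argminGraph u D) where
  isCompact_section y := by
    have hsection : {x | (x, y) ∈ _root_.argminGraph u D} =
        {x | (x, y) ∈ D ∩ u ⁻¹' Iic (optimalValue u D y)} :=
      ext fun _ => and_congr_right fun hx =>
        ⟨le_of_eq, fun hle => hle.antisymm (hD.optimalValue_le hu hx)⟩
    rw [hsection]
    exact (hD.inter_preimage_Iic hu _).isCompact_section y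
  measurableSet_snd_image F hF := by
    rw [hD.snd_image_argminGraph_inter hu hF]
    exact (hD.measurableSet_snd_image F hF).inter <| measurableSet_le
      ((hD.inter_isClosed hF).measurable_optimalValue (hu.mono inter_subset_left))
      (hD.measurable_optimalValue hu)

end IsMeasurableCompactGraph

theorem exists_measurable_mem_graph [TopologicalSpace P] [MeasurableSpace P]
    [ConditionallyCompleteLinearOrder γ] [TopologicalSpace γ] [OrderTopology γ]
    [SecondCountableTopology γ] [MeasurableSpace γ] [BorelSpace γ] {D : Set (γ × P)}
    (hD : IsMeasurableCompactGraph D) :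
    ∃ g : P → γ, Measurable g ∧ ∀ y ∈ Prod.snd '' D, (g y, y) ∈ D := by
  have hfst : LowerSemicontinuousOn Prod.fst D := continuous_fst.continuousOn.lowerSemicontinuousOn
  refine ⟨optimalValue Prod.fst D, hD.measurable_optimalValue hfst, fun y hy => ?_⟩
  obtain ⟨x, hx, hxy⟩ := (hD.isLeast_optimalValue hfst hy).1
  exact hxy ▸ hx

theorem exists_continuousOn_image_cantorSet_eq [TopologicalSpace E] [MetrizableSpace E]
    [MeasurableSpace E] [BorelSpace E] {S : Set E} (hS : IsCompact S) (hne : S.Nonempty) :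
    ∃ c : ℝ → E, Measurable c ∧ ContinuousOn c cantorSet ∧ c '' cantorSet = S := by
  classical
  let _ := metrizableSpaceMetric E
  have _ : CompactSpace S := isCompact_iff_compactSpace.1 hS
  have _ : Nonempty S := hne.to_subtype
  obtain ⟨b, hb, hbsurj⟩ := exists_nat_bool_continuous_surjective_of_compact S
  let c₀ : cantorSet → E := fun t => b (cantorSetHomeomorphNatToBool t)
  let c : ℝ → E := fun t => if ht : t ∈ cantorSet then c₀ ⟨t, ht⟩ else hne.some
  have hc₀ : cantorSet.domRestrict c = c₀ := funext fun t => dif_pos t.2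
  have hcont : ContinuousOn c cantorSet := by
    rw [continuousOn_iff_continuous_domRestrict, hc₀]
    fun_prop
  have hpiecewise : cantorSet.piecewise c (fun _ => hne.some) = c := by
    ext t
    by_cases ht : t ∈ cantorSet <;> simp [c, ht]
  refine ⟨c, hpiecewise ▸ hcont.measurable_piecewise continuousOn_const
    isClosed_cantorSet.measurableSet, hcont, ?_⟩
  calc c '' cantorSet = range c₀ := by rw [← range_domRestrict, hc₀]
    _ = range ((↑) : S → E) :=
        (hbsurj.comp cantorSetHomeomorphNatToBool.surjective).range_comp _
    _ = S := Subtype.range_coe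

theorem exists_isCompact_image_prodMap_eq [TopologicalSpace E] [MetrizableSpace E]
    [MeasurableSpace E] [BorelSpace E] [TopologicalSpace P] [T2Space P] {K : Set (E × P)}
    (hK : IsCompact K) (hne : K.Nonempty) :
    ∃ (c : ℝ → E) (D : Set (ℝ × P)), Measurable c ∧ ContinuousOn (Prod.map c id) D ∧
      IsCompact D ∧ Prod.map c id '' D = K := by
  obtain ⟨c, hcm, hc, hcK⟩ :=
    exists_continuousOn_image_cantorSet_eq (hK.image continuous_fst) (hne.image _)
  have hdom : IsCompact (cantorSet ×ˢ (Prod.snd '' K)) :=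
    isCompact_cantorSet.prod (hK.image continuous_snd)
  have hcont : ContinuousOn (Prod.map c id) (cantorSet ×ˢ (Prod.snd '' K)) :=
    hc.prodMap continuousOn_id
  refine ⟨c, cantorSet ×ˢ (Prod.snd '' K) ∩ Prod.map c id ⁻¹' K, hcm,
    hcont.mono inter_subset_left, hdom.of_isClosed_subset
      (hcont.preimage_isClosed_of_isClosed hdom.isClosed hK.isClosed) inter_subset_left,
    (image_subset_iff.2 inter_subset_right).antisymm fun w hw => ?_⟩
  obtain ⟨t, ht, htw⟩ : w.1 ∈ c '' cantorSet := hcK ▸ mem_image_of_mem _ hw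
  have hmap : Prod.map c id (t, w.2) = w := Prod.ext htw rfl
  exact ⟨(t, w.2), ⟨⟨ht, mem_image_of_mem _ hw⟩, mem_preimage.2 (hmap.symm ▸ hw)⟩, hmap⟩

theorem exists_measurable_mem_argminGraph [Nonempty E] [TopologicalSpace E] [MetrizableSpace E]
    [MeasurableSpace E] [BorelSpace E] [TopologicalSpace P] [T2Space P] [MeasurableSpace P]
    [OpensMeasurableSpace P] [ConditionallyCompleteLinearOrder γ] [TopologicalSpace γ]
    [OrderTopology γ] [SecondCountableTopology γ] {K : Set (E × P)} (hK : IsCompact K)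
    {u : E × P → γ} (hu : LowerSemicontinuousOn u K) :
    ∃ g : P → E, Measurable g ∧ ∀ y ∈ Prod.snd '' K, (g y, y) ∈ argminGraph u K := by
  borelize γ
  obtain rfl | hne := K.eq_empty_or_nonempty
  · exact ⟨fun _ => Classical.arbitrary E, measurable_const, by simp⟩
  obtain ⟨c, D, hcm, hc, hDc, rfl⟩ := exists_isCompact_image_prodMap_eq hK hne
  have hD := IsMeasurableCompactGraph.of_isCompact hDc
  have huD : LowerSemicontinuousOn (u ∘ Prod.map c id) D := hu.comp hc (mapsTo_image _ _)
  obtain ⟨g, hgm, hg⟩ := exists_measurable_mem_graph (hD.argminGraph huD)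
  rw [hD.snd_image_argminGraph huD] at hg
  refine ⟨c ∘ g, hcm.comp hgm, ?_⟩
  rintro _ ⟨_, ⟨w, hw, rfl⟩, rfl⟩
  exact prodMap_mem_argminGraph (hg w.2 ⟨w, hw, rfl⟩)

end ParametricMinimization

section Measure

theorem integral_map_le_of_comp_ae_le {Ω : Type*} [MeasurableSpace Ω] {μ : Measure Ω} {r : Ω → Ω}
    (hr : Measurable r) {f : Ω → ℝ} (hf : Integrable f μ) (hfr : Integrable f (μ.map r))
    (hle : f ∘ r ≤ᵐ[μ] f) : ∫ w, f w ∂μ.map r ≤ ∫ w, f w ∂μ := by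
  rw [integral_map hr.aemeasurable hfr.aestronglyMeasurable]
  exact integral_mono_ae (hfr.comp_measurable hr) hf hle

theorem comp_ae_eq_of_integral_map_eq {Ω : Type*} [MeasurableSpace Ω] {μ : Measure Ω} {r : Ω → Ω}
    (hr : Measurable r) {f : Ω → ℝ} (hf : Integrable f μ) (hfr : Integrable f (μ.map r))
    (hle : f ∘ r ≤ᵐ[μ] f) (heq : ∫ w, f w ∂μ.map r = ∫ w, f w ∂μ) : f ∘ r =ᵐ[μ] f := by
  rw [integral_map hr.aemeasurable hfr.aestronglyMeasurable] at heq
  exact (integral_eq_iff_of_ae_le (hfr.comp_measurable hr) hf hle).1 heq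

variable {E P : Type*} [MeasurableSpace E] [MeasurableSpace P]

/-- `μ` is feasible for the linear program with value `ρ`: a finite measure carried by `K` with
marginal `φ` on the parameter space. -/
structure IsFeasible (K : Set (E × P)) (φ : Measure P) (μ : Measure (E × P)) : Prop where
  isFiniteMeasure : IsFiniteMeasure μ
  measure_compl : μ Kᶜ = 0
  map_snd : μ.map Prod.snd = φ

namespace IsFeasible

variable {K : Set (E × P)} {φ : Measure P} {μ : Measure (E × P)}

theorem restrict_eq (hμ : IsFeasible K φ μ) : μ.restrict K = μ :=
  Measure.restrict_eq_self_of_ae_mem hμ.measure_compl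

theorem map_graph [IsFiniteMeasure φ] {g : P → E} (hg : Measurable g) (hK : MeasurableSet K)
    (hgK : ∀ᵐ y ∂φ, (g y, y) ∈ K) : IsFeasible K φ (φ.map fun y => (g y, y)) where
  isFiniteMeasure := inferInstance
  measure_compl := (ae_map_iff (hg.prodMk measurable_id).aemeasurable hK).2 hgK
  map_snd := (Measure.map_map measurable_snd (hg.prodMk measurable_id)).trans Measure.map_id

theorem map_graph_eq (hμ : IsFeasible K φ μ) {g : P → E} (hg : Measurable g) :
    (φ.map fun y => (g y, y)) = μ.map fun w => (g w.2, w.2) := by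
  rw [← hμ.map_snd]
  exact Measure.map_map (hg.prodMk measurable_id) measurable_snd

theorem integrable [TopologicalSpace E] [TopologicalSpace P] [T2Space E] [T2Space P]
    [OpensMeasurableSpace (E × P)] (hμ : IsFeasible K φ μ) (hK : IsCompact K) {f : E × P → ℝ}
    (hf : ContinuousOn f K) : Integrable f μ := by
  have := hμ.isFiniteMeasure
  have hint : IntegrableOn f K μ := hf.integrableOn_compact hK
  rwa [IntegrableOn, hμ.restrict_eq] at hint

theorem setIntegral_of_eq_map_graph {G : Type*} [NormedAddCommGroup G] [NormedSpace ℝ G]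
    (hμ : IsFeasible K φ μ) {Y : Set P} (hφY : φ Yᶜ = 0) {g : P → E} (hg : Measurable g)
    (hμg : μ = φ.map fun y => (g y, y)) {F : E × P → G} (hF : AEStronglyMeasurable F μ) :
    ∫ w in K, F w ∂μ = ∫ y in Y, F (g y, y) ∂φ := by
  rw [hμ.restrict_eq, Measure.restrict_eq_self_of_ae_mem hφY, hμg,
    integral_map (hg.prodMk measurable_id').aemeasurable (hμg ▸ hF)]

theorem comp_graph_ae_le [TopologicalSpace E] [TopologicalSpace P] [T2Space P]
    [OpensMeasurableSpace P] (hμ : IsFeasible K φ μ) (hK : IsCompact K) {f : E × P → ℝ}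
    (hf : ContinuousOn f K) {g : P → E} (hgK : ∀ᵐ y ∂φ, (g y, y) ∈ argminGraph f K) :
    f ∘ (fun w => (g w.2, w.2)) ≤ᵐ[μ] f := by
  rw [← hμ.map_snd] at hgK
  have hmem : ∀ᵐ w ∂μ, w ∈ K := hμ.measure_compl
  filter_upwards [hmem, ae_of_ae_map measurable_snd.aemeasurable hgK] with w hw hgw
  exact hgw.2.trans_le
    ((IsMeasurableCompactGraph.of_isCompact hK).optimalValue_le hf.lowerSemicontinuousOn hw)

section Topological

variable [TopologicalSpace E] [TopologicalSpace P] [T2Space E] [T2Space P]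
  [OpensMeasurableSpace P] [OpensMeasurableSpace (E × P)] [IsFiniteMeasure φ]

theorem integral_map_graph_le (hμ : IsFeasible K φ μ) (hK : IsCompact K) {f : E × P → ℝ}
    (hf : ContinuousOn f K) {g : P → E} (hg : Measurable g)
    (hgK : ∀ᵐ y ∂φ, (g y, y) ∈ argminGraph f K) :
    ∫ w, f w ∂φ.map (fun y => (g y, y)) ≤ ∫ w, f w ∂μ := by
  have hν := map_graph hg hK.measurableSet (hgK.mono fun _ hy => hy.1)
  have hint := hν.integrable hK hf
  rw [hμ.map_graph_eq hg] at hint ⊢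
  exact integral_map_le_of_comp_ae_le (by fun_prop) (hμ.integrable hK hf) hint
    (hμ.comp_graph_ae_le hK hf hgK)

theorem eq_map_graph (hμ : IsFeasible K φ μ) (hK : IsCompact K) {f : E × P → ℝ}
    (hf : ContinuousOn f K) {g : P → E} (hg : Measurable g)
    (hgK : ∀ᵐ y ∂φ, (g y, y) ∈ argminGraph f K)
    (huniq : ∀ᵐ y ∂φ, {x | (x, y) ∈ argminGraph f K}.Subsingleton)
    (hopt : ∫ w, f w ∂φ.map (fun y => (g y, y)) = ∫ w, f w ∂μ) :
    μ = φ.map fun y => (g y, y) := by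
  have hν := map_graph hg hK.measurableSet (hgK.mono fun _ hy => hy.1)
  have hint := hν.integrable hK hf
  rw [hμ.map_graph_eq hg] at hint hopt ⊢
  have hcost := comp_ae_eq_of_integral_map_eq (by fun_prop) (hμ.integrable hK hf) hint
    (hμ.comp_graph_ae_le hK hf hgK) hopt
  have hmem : ∀ᵐ w ∂μ, w ∈ K := hμ.measure_compl
  rw [← hμ.map_snd] at hgK huniq
  have hfix : (fun w => (g w.2, w.2)) =ᵐ[μ] id := by
    filter_upwards [hmem, hcost, ae_of_ae_map measurable_snd.aemeasurable hgK,
      ae_of_ae_map measurable_snd.aemeasurable huniq] with w hw hwcost hgw hwuniq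
    have hwmin : w ∈ argminGraph f K := ⟨hw, hwcost.symm.trans hgw.2⟩
    exact Prod.ext (hwuniq hgw hwmin) rfl
  rw [Measure.map_congr hfix, Measure.map_id]

end Topological

end IsFeasible

end Measure

theorem stmt4_general {E P : Type*} [Nonempty E] [TopologicalSpace E] [MetrizableSpace E]
    [SecondCountableTopology E] [MeasurableSpace E] [BorelSpace E] [TopologicalSpace P] [T2Space P]
    [MeasurableSpace P] [OpensMeasurableSpace P]
    (Y : Set P) (f : E × P → ℝ) (K : Set (E × P)) (hf : ContinuousOn f K)
    (Ky : P → Set E) (hKdef : K = {w | w.2 ∈ Y ∧ w.1 ∈ Ky w.2}) (hKc : IsCompact K)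
    (hne : ∀ y ∈ Y, (Ky y).Nonempty)
    (J : P → ℝ) (hJ : ∀ y, J y = sInf ((fun x => f (x, y)) '' Ky y))
    (Xstar : P → Set E) (hXs : ∀ y, Xstar y = {x ∈ Ky y | f (x, y) = J y})
    (φ : Measure P) [IsFiniteMeasure φ] (hφY : φ Yᶜ = 0)
    (ρ : ℝ)
    (hρ : ρ = sInf {r | ∃ μ : Measure (E × P),
      IsFiniteMeasure μ ∧ μ Kᶜ = 0 ∧ μ.map Prod.snd = φ ∧ r = ∫ w in K, f w ∂μ})
    (xstar : P → E) (hxu : ∀ᵐ y ∂φ, Xstar y = {xstar y}) :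
    ∃ g : P → E,
      Measurable g ∧
      (∀ y ∈ Y, g y ∈ Ky y) ∧
      (∀ᵐ y ∂φ, g y = xstar y) ∧
      ρ = ∫ y in Y, f (g y, y) ∂φ ∧
      ∀ μ : Measure (E × P), IsFiniteMeasure μ → μ Kᶜ = 0 → μ.map Prod.snd = φ →
        ∫ w in K, f w ∂μ = ρ → μ = φ.map fun y => (g y, y) := by
  have hsection : ∀ y ∈ Y, {x | (x, y) ∈ K} = Ky y := fun y hy => by
    ext x
    simp [hKdef, hy]
  have hargmin : ∀ y ∈ Y, {x | (x, y) ∈ argminGraph f K} = Xstar y := fun y hy => by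
    rw [hXs, hJ, ← hsection y hy]
    rfl
  obtain ⟨g, hg, hgmin⟩ := exists_measurable_mem_argminGraph hKc hf.lowerSemicontinuousOn
  have hgY : ∀ y ∈ Y, (g y, y) ∈ argminGraph f K := fun y hy =>
    let ⟨x, hx⟩ := hne y hy
    hgmin y ⟨(x, y), (hsection y hy).ge hx, rfl⟩
  have hYae : ∀ᵐ y ∂φ, y ∈ Y := hφY
  have hgae : ∀ᵐ y ∂φ, (g y, y) ∈ argminGraph f K := hYae.mono hgY
  have huniq : ∀ᵐ y ∂φ, {x | (x, y) ∈ argminGraph f K} = {xstar y} := by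
    filter_upwards [hYae, hxu] with y hy hxy using (hargmin y hy).trans hxy
  have hν := IsFeasible.map_graph hg hKc.measurableSet (hgae.mono fun _ hy => hy.1)
  have hρν : ρ = ∫ w, f w ∂φ.map (fun y => (g y, y)) := by
    refine hρ.trans (IsLeast.csInf_eq ⟨⟨_, hν.1, hν.2, hν.3, by rw [hν.restrict_eq]⟩, ?_⟩)
    rintro _ ⟨μ, hμfin, hμK, hμφ, rfl⟩
    have hμ : IsFeasible K φ μ := ⟨hμfin, hμK, hμφ⟩
    rw [hμ.restrict_eq]
    exact hμ.integral_map_graph_le hKc hf hg hgae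
  refine ⟨g, hg, fun y hy => (hsection y hy).le (hgY y hy).1, ?_, ?_,
    fun μ hμfin hμK hμφ hopt => ?_⟩
  · filter_upwards [hgae, huniq] with y hgy hy using hy.le hgy
  · rw [hρν, ← hν.setIntegral_of_eq_map_graph hφY hg rfl
      (hν.integrable hKc hf).aestronglyMeasurable, hν.restrict_eq]
  · have hμ : IsFeasible K φ μ := ⟨hμfin, hμK, hμφ⟩
    rw [hμ.restrict_eq, hρν] at hopt
    exact hμ.eq_map_graph hKc hf hg hgae
      (huniq.mono fun _ hy => hy ▸ subsingleton_singleton) hopt.symm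

/-- when the minimizer is `φ`-a.e. unique, there is a measurable selector
`g` agreeing a.e. with `x*`, `ρ = ∫_Y f(g y, y) dφ`, and all joint moments of any
optimal `μ*` are the corresponding moments of `y ↦ (g y, y)`. -/
theorem stmt4 (n p m : ℕ)
    (Y : Set (Fin p → ℝ)) (hYc : IsCompact Y)
    (f : (Fin n → ℝ) × (Fin p → ℝ) → ℝ) (hf : Continuous f)
    (h : Fin m → (Fin n → ℝ) × (Fin p → ℝ) → ℝ) (hh : ∀ j, Continuous (h j))
    (K : Set ((Fin n → ℝ) × (Fin p → ℝ)))
    (hKdef : K = {w | w.2 ∈ Y ∧ ∀ j, 0 ≤ h j w}) (hKc : IsCompact K)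
    (Ky : (Fin p → ℝ) → Set (Fin n → ℝ))
    (hKy : ∀ y, Ky y = {x | ∀ j, 0 ≤ h j (x, y)})
    (hne : ∀ y ∈ Y, (Ky y).Nonempty)
    (J : (Fin p → ℝ) → ℝ)
    (hJ : ∀ y, J y = sInf ((fun x => f (x, y)) '' Ky y))
    (Xstar : (Fin p → ℝ) → Set (Fin n → ℝ))
    (hXs : ∀ y, Xstar y = {x ∈ Ky y | f (x, y) = J y})
    (φ : Measure (Fin p → ℝ)) [IsProbabilityMeasure φ] (hφY : φ Yᶜ = 0)
    (ρ : ℝ)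
    (hρ : ρ = sInf {r | ∃ μ : Measure ((Fin n → ℝ) × (Fin p → ℝ)),
      IsFiniteMeasure μ ∧ μ Kᶜ = 0 ∧ μ.map Prod.snd = φ ∧ r = ∫ w in K, f w ∂μ})
    (xstar : (Fin p → ℝ) → (Fin n → ℝ))
    (hxu : ∀ᵐ y ∂φ, Xstar y = {xstar y}) :
    ∃ g : (Fin p → ℝ) → (Fin n → ℝ),
      Measurable (fun y : Y => g y.1) ∧
      (∀ y ∈ Y, g y ∈ Ky y) ∧
      (∀ᵐ y ∂φ, g y = xstar y) ∧
      ρ = ∫ y in Y, f (g y, y) ∂φ ∧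
      (∀ μstar : Measure ((Fin n → ℝ) × (Fin p → ℝ)),
        IsFiniteMeasure μstar → μstar Kᶜ = 0 → μstar.map Prod.snd = φ →
        ∫ w in K, f w ∂μstar = ρ →
        ∀ (α : Fin n → ℕ) (β : Fin p → ℕ),
          ∫ w in K, (∏ k, w.1 k ^ α k) * ∏ l, w.2 l ^ β l ∂μstar
            = ∫ y in Y, (∏ l, y l ^ β l) * ∏ k, g y k ^ α k ∂φ) := by
  have hKgraph : K = {w | w.2 ∈ Y ∧ w.1 ∈ Ky w.2} := by
    simpa only [hKy, mem_ofPred_eq] using hKdef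
  obtain ⟨g, hg, hgK, hgx, hρg, huniq⟩ := stmt4_general Y f K hf.continuousOn Ky hKgraph hKc hne
    J hJ Xstar hXs φ hφY ρ hρ xstar hxu
  refine ⟨g, hg.comp measurable_subtype_coe, hgK, hgx, hρg, fun μ hμfin hμK hμ hopt α β => ?_⟩
  simpa only [mul_comm] using IsFeasible.setIntegral_of_eq_map_graph ⟨hμfin, hμK, hμ⟩ hφY hg
    (huniq μ hμfin hμK hμ hopt) (F := fun w => (∏ k, w.1 k ^ α k) * ∏ l, w.2 l ^ β l)
    (Continuous.aestronglyMeasurable (by fun_prop))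
end

section
/- Suppose Y ⊂ ℝ^p and K are compact, K_y is nonempty for every y ∈ Y, and for φ-almost all y ∈ Y the set X*_y is a singleton {x*(y)}. Then for every Borel measurable mapping h : ℝ^n → ℝ^q and every measure μ* attaining ρ, one has ∫_Y h(x*(y)) dφ(y) = ∫_K h(x) dμ*(x,y). -/
open MeasureTheory Set TopologicalSpace Filter Topology

/-!
For `φ`-almost every `y` write `s y` for the unique minimizer of `f (·, y)` over the slice of `K`.
A point `w` of `K` fails to minimize exactly when a rational `r` separates the value of some
competitor in its slice from `f w`, so by compactness the set of minimizers is Borel, and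
Lusin–Souslin makes `s` almost everywhere measurable. Pushing `φ` forward along `y ↦ (s y, y)` is
then admissible, and every admissible `μ` satisfies `f (s w.2, w.2) ≤ f w` almost everywhere; if `μ`
is optimal the integrals agree, hence so do the integrands, and `μ` is carried by the graph of `s`.
-/

theorem integrable_of_continuousOn_of_ae_mem {Ω E : Type*} [TopologicalSpace Ω] [T2Space Ω]
    [MeasurableSpace Ω] [OpensMeasurableSpace Ω] [NormedAddCommGroup E] {μ : Measure Ω}
    [IsFiniteMeasure μ] {K : Set Ω} {f : Ω → E} (hK : IsCompact K) (hf : ContinuousOn f K)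
    (hμK : ∀ᵐ w ∂μ, w ∈ K) : Integrable f μ := by
  rw [← Measure.restrict_eq_self_of_ae_mem hμK]
  exact hf.integrableOn_compact hK

theorem integral_comp_of_measurePreserving {α β E : Type*} [MeasurableSpace α] [MeasurableSpace β]
    [NormedAddCommGroup E] [NormedSpace ℝ E] {μ : Measure α} {ν : Measure β} {T : α → β} {g : β → E}
    (hT : MeasurePreserving T μ ν) (hg : AEStronglyMeasurable g ν) :
    ∫ a, g (T a) ∂μ = ∫ b, g b ∂ν := by
  rw [← hT.map_eq] at hg ⊢
  exact (integral_map hT.aemeasurable hg).symm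

section Graph

variable {X Y : Type*} [MeasurableSpace X] [MeasurableSpace Y] {φ : Measure Y} {s : Y → X}

theorem aemeasurable_of_measurableSet_graph [StandardBorelSpace X] [StandardBorelSpace Y]
    {G : Set (X × Y)} (hG : MeasurableSet G) (hs : ∀ᵐ y ∂φ, ∀ x, (x, y) ∈ G ↔ x = s y) :
    AEMeasurable s φ := by
  obtain ⟨T, hTφ, hT, hsT⟩ := hs.exists_measurable_mem
  refine NullMeasurable.aemeasurable fun B hB => ?_
  have hinj : InjOn Prod.snd (G ∩ Prod.snd ⁻¹' T ∩ Prod.fst ⁻¹' B) := by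
    rintro ⟨x, y⟩ ⟨⟨hx, hy⟩, -⟩ ⟨x', _⟩ ⟨⟨hx', -⟩, -⟩ rfl
    rw [(hsT y hy x).1 hx, (hsT y hy x').1 hx']
  have himage : MeasurableSet (Prod.snd '' (G ∩ Prod.snd ⁻¹' T ∩ Prod.fst ⁻¹' B)) :=
    ((hG.inter (measurable_snd hT)).inter (measurable_fst hB)).image_of_measurable_injOn
      measurable_snd hinj
  refine himage.nullMeasurableSet.congr ?_
  filter_upwards [hTφ] with y hy
  refine propext ⟨?_, fun hyB => ⟨(s y, y), ⟨⟨(hsT y hy _).2 rfl, hy⟩, hyB⟩, rfl⟩⟩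
  rintro ⟨⟨x, _⟩, ⟨⟨hx, -⟩, hxB⟩, rfl⟩
  exact (hsT _ hy x).1 hx ▸ hxB

theorem measurePreserving_snd_map_graph (hs : AEMeasurable s φ) :
    MeasurePreserving Prod.snd (φ.map fun y => (s y, y)) φ := by
  refine ⟨measurable_snd, ?_⟩
  rw [AEMeasurable.map_map_of_aemeasurable measurable_snd.aemeasurable
    (hs.prodMk aemeasurable_id')]
  exact Measure.map_id

theorem ae_mem_map_graph {K : Set (X × Y)} (hK : MeasurableSet K) (hs : AEMeasurable s φ)
    (hsK : ∀ᵐ y ∂φ, (s y, y) ∈ K) : ∀ᵐ w ∂φ.map fun y => (s y, y), w ∈ K :=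
  (ae_map_iff (hs.prodMk aemeasurable_id') hK).2 hsK

theorem eq_map_graph_of_ae_fst_eq {μ : Measure (X × Y)} (hs : AEMeasurable s φ)
    (hμ : MeasurePreserving Prod.snd μ φ) (h : ∀ᵐ w ∂μ, w.1 = s w.2) :
    μ = φ.map fun y => (s y, y) := by
  have hgraph : AEMeasurable (fun y => (s y, y)) (μ.map Prod.snd) := by
    rw [hμ.map_eq]
    exact hs.prodMk aemeasurable_id'
  calc μ = μ.map id := Measure.map_id.symm
    _ = μ.map ((fun y => (s y, y)) ∘ Prod.snd) :=
        Measure.map_congr (h.mono fun w hw => Prod.ext hw rfl)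
    _ = φ.map fun y => (s y, y) := by
        rw [← AEMeasurable.map_map_of_aemeasurable hgraph hμ.aemeasurable, hμ.map_eq]

end Graph

/-- The points `(x, y)` of `K` at which `x` minimizes `f (·, y)` over the slice of `K` above `y`.
That slice is `K_y` for `y ∈ Y`, so the slices of this set above `Y` are the solution sets `X*_y`.
Minimality is expressed by comparison within the slice, not through an infimum. -/
def sliceArgmin {X Y : Type*} (K : Set (X × Y)) (f : X × Y → ℝ) : Set (X × Y) :=
  {w ∈ K | ∀ x, (x, w.2) ∈ K → f w ≤ f (x, w.2)}

/-- The optimal value `J y` of `f (·, y)` over the slice of `K` above `y`; as a real infimum it is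
`0` when the slice is empty. -/
noncomputable def valueFunction {X Y : Type*} (K : Set (X × Y)) (f : X × Y → ℝ) (y : Y) : ℝ :=
  sInf ((fun x => f (x, y)) '' {x | (x, y) ∈ K})

/-- The costs of the measures admissible for the linear program over measures on `K` with marginal
`φ`; the infimum of this set is the optimal value `ρ`. -/
def admissibleCosts {X Y : Type*} [MeasurableSpace X] [MeasurableSpace Y] (K : Set (X × Y))
    (f : X × Y → ℝ) (φ : Measure Y) : Set ℝ :=
  {r | ∃ μ : Measure (X × Y),
    IsFiniteMeasure μ ∧ μ Kᶜ = 0 ∧ μ.map Prod.snd = φ ∧ r = ∫ w in K, f w ∂μ}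

section SliceArgmin

variable {X Y : Type*} {K : Set (X × Y)} {f : X × Y → ℝ}

theorem sliceArgmin_eq_diff_iUnion_rat :
    sliceArgmin K f =
      K \ ⋃ r : ℚ,
        Prod.snd ⁻¹' (Prod.snd '' (K ∩ f ⁻¹' Iic (r : ℝ))) \ (K ∩ f ⁻¹' Iic (r : ℝ)) := by
  ext w
  refine and_congr_right fun hw => ⟨fun hmin hmem => ?_, fun hnot x hx => ?_⟩
  · obtain ⟨r, ⟨⟨x, _⟩, ⟨hx, hxr⟩, rfl⟩, hwr⟩ := mem_iUnion.1 hmem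
    exact hwr ⟨hw, (hmin x hx).trans hxr⟩
  · by_contra! hlt
    obtain ⟨r, hxr, hrw⟩ := exists_rat_btwn hlt
    exact hnot (mem_iUnion.2 ⟨r, ⟨_, ⟨hx, hxr.le⟩, rfl⟩, fun h => hrw.not_ge h.2⟩)

variable [TopologicalSpace X] [TopologicalSpace Y]

theorem mk_mem_sliceArgmin_iff (hK : IsCompact K) (hf : LowerSemicontinuousOn f K) {x : X} {y : Y} :
    (x, y) ∈ sliceArgmin K f ↔ (x, y) ∈ K ∧ f (x, y) = valueFunction K f y := by
  refine and_congr_right fun hx => ⟨fun hmin => ?_, fun hinf x' hx' => ?_⟩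
  · have hleast : IsLeast ((fun x => f (x, y)) '' {x | (x, y) ∈ K}) (f (x, y)) :=
      ⟨⟨x, hx, rfl⟩, forall_mem_image.2 hmin⟩
    exact hleast.csInf_eq.symm
  · have hbdd : BddBelow ((fun x => f (x, y)) '' {x | (x, y) ∈ K}) :=
      (hf.bddBelow_of_isCompact hK).mono (image_subset_iff.2 fun _ => mem_image_of_mem f)
    exact hinf.trans_le (csInf_le hbdd ⟨x', hx', rfl⟩)

theorem measurableSet_sliceArgmin [T2Space X] [T2Space Y] [MeasurableSpace X] [MeasurableSpace Y]
    [OpensMeasurableSpace Y] [OpensMeasurableSpace (X × Y)] (hK : IsCompact K)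
    (hf : LowerSemicontinuousOn f K) : MeasurableSet (sliceArgmin K f) := by
  have hsub (r : ℝ) : IsCompact (K ∩ f ⁻¹' Iic r) := hf.isCompact_inter_preimage_Iic hK r
  rw [sliceArgmin_eq_diff_iUnion_rat]
  exact hK.measurableSet.diff <| MeasurableSet.iUnion fun r =>
    (measurable_snd ((hsub r).image continuous_snd).measurableSet).diff (hsub r).measurableSet

end SliceArgmin

section Optimality

variable {X Y : Type*} [MeasurableSpace X] [MeasurableSpace Y] {K : Set (X × Y)} {f : X × Y → ℝ}
  {φ : Measure Y} {s : Y → X} {μ : Measure (X × Y)}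

theorem ae_comp_graph_le (hs : ∀ᵐ y ∂φ, (s y, y) ∈ sliceArgmin K f)
    (hμ : MeasurePreserving Prod.snd μ φ) (hμK : ∀ᵐ w ∂μ, w ∈ K) :
    ∀ᵐ w ∂μ, f (s w.2, w.2) ≤ f w := by
  filter_upwards [hμK, hμ.quasiMeasurePreserving.ae hs] with w hwK hw
  exact hw.2 w.1 hwK

variable [TopologicalSpace X] [T2Space X] [TopologicalSpace Y] [T2Space Y]
  [OpensMeasurableSpace (X × Y)] [IsFiniteMeasure φ]

theorem integrable_comp_graph (hK : IsCompact K) (hf : ContinuousOn f K) (hs : AEMeasurable s φ)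
    (hsK : ∀ᵐ y ∂φ, (s y, y) ∈ K) : Integrable (fun y => f (s y, y)) φ :=
  (integrable_of_continuousOn_of_ae_mem hK hf
    (ae_mem_map_graph hK.measurableSet hs hsK)).comp_aemeasurable (hs.prodMk aemeasurable_id')

theorem integral_comp_graph_mem_admissibleCosts (hK : IsCompact K) (hf : ContinuousOn f K)
    (hs : AEMeasurable s φ) (hsK : ∀ᵐ y ∂φ, (s y, y) ∈ K) :
    ∫ y, f (s y, y) ∂φ ∈ admissibleCosts K f φ := by
  have hmapK := ae_mem_map_graph hK.measurableSet hs hsK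
  refine ⟨φ.map fun y => (s y, y), inferInstance, hmapK,
    (measurePreserving_snd_map_graph hs).map_eq, ?_⟩
  rw [Measure.restrict_eq_self_of_ae_mem hmapK, integral_map (hs.prodMk aemeasurable_id')
    (integrable_of_continuousOn_of_ae_mem hK hf hmapK).aestronglyMeasurable]

theorem isLeast_admissibleCosts (hK : IsCompact K) (hf : ContinuousOn f K) (hs : AEMeasurable s φ)
    (hsmin : ∀ᵐ y ∂φ, (s y, y) ∈ sliceArgmin K f) :
    IsLeast (admissibleCosts K f φ) (∫ y, f (s y, y) ∂φ) := by
  have hsK : ∀ᵐ y ∂φ, (s y, y) ∈ K := hsmin.mono fun _ hy => hy.1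
  have hint : Integrable (fun y => f (s y, y)) φ := integrable_comp_graph hK hf hs hsK
  refine ⟨integral_comp_graph_mem_admissibleCosts hK hf hs hsK, ?_⟩
  rintro _ ⟨μ, hμfin, hμK, hμφ, rfl⟩
  have hμ : MeasurePreserving Prod.snd μ φ := ⟨measurable_snd, hμφ⟩
  rw [Measure.restrict_eq_self_of_ae_mem hμK]
  calc ∫ y, f (s y, y) ∂φ = ∫ w, f (s w.2, w.2) ∂μ :=
        (integral_comp_of_measurePreserving hμ hint.aestronglyMeasurable).symm
    _ ≤ ∫ w, f w ∂μ :=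
        integral_mono_ae (hμ.integrable_comp_of_integrable hint)
          (integrable_of_continuousOn_of_ae_mem hK hf hμK) (ae_comp_graph_le hsmin hμ hμK)

theorem ae_mem_sliceArgmin_of_integral_eq (hK : IsCompact K) (hf : ContinuousOn f K)
    (hs : AEMeasurable s φ) (hsmin : ∀ᵐ y ∂φ, (s y, y) ∈ sliceArgmin K f)
    (hμ : MeasurePreserving Prod.snd μ φ) (hμK : ∀ᵐ w ∂μ, w ∈ K)
    (hopt : ∫ w, f w ∂μ = ∫ y, f (s y, y) ∂φ) : ∀ᵐ w ∂μ, w ∈ sliceArgmin K f := by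
  have : IsFiniteMeasure (μ.map Prod.snd) := hμ.map_eq ▸ inferInstance
  have : IsFiniteMeasure μ := Measure.isFiniteMeasure_of_map hμ.aemeasurable
  have hint : Integrable (fun y => f (s y, y)) φ :=
    integrable_comp_graph hK hf hs (hsmin.mono fun _ hy => hy.1)
  have hcost_eq : (fun w => f (s w.2, w.2)) =ᵐ[μ] f :=
    (integral_eq_iff_of_ae_le (hμ.integrable_comp_of_integrable hint)
      (integrable_of_continuousOn_of_ae_mem hK hf hμK) (ae_comp_graph_le hsmin hμ hμK)).1
      ((integral_comp_of_measurePreserving hμ hint.aestronglyMeasurable).trans hopt.symm)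
  filter_upwards [hcost_eq, hμK, hμ.quasiMeasurePreserving.ae hsmin] with w hw hwK hmin
  exact ⟨hwK, fun x hx => hw.symm.trans_le (hmin.2 x hx)⟩

end Optimality

section UniqueMinimizer

variable {X Y : Type*} [TopologicalSpace X] [PolishSpace X] [MeasurableSpace X] [BorelSpace X]
  [TopologicalSpace Y] [PolishSpace Y] [MeasurableSpace Y] [BorelSpace Y]
  {K : Set (X × Y)} {f : X × Y → ℝ} {φ : Measure Y} {s : Y → X}

theorem aemeasurable_of_unique_sliceArgmin (hK : IsCompact K) (hf : LowerSemicontinuousOn f K)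
    (hs : ∀ᵐ y ∂φ, ∀ x, (x, y) ∈ sliceArgmin K f ↔ x = s y) : AEMeasurable s φ :=
  aemeasurable_of_measurableSet_graph (measurableSet_sliceArgmin hK hf) hs

variable [IsFiniteMeasure φ] {μ : Measure (X × Y)}

theorem eq_map_graph_of_integral_eq_sInf_admissibleCosts (hK : IsCompact K)
    (hf : ContinuousOn f K) (hs : ∀ᵐ y ∂φ, ∀ x, (x, y) ∈ sliceArgmin K f ↔ x = s y)
    (hμ : MeasurePreserving Prod.snd μ φ) (hμK : ∀ᵐ w ∂μ, w ∈ K)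
    (hopt : ∫ w, f w ∂μ = sInf (admissibleCosts K f φ)) : μ = φ.map fun y => (s y, y) := by
  have hsmeas : AEMeasurable s φ :=
    aemeasurable_of_unique_sliceArgmin hK hf.lowerSemicontinuousOn hs
  have hsmin : ∀ᵐ y ∂φ, (s y, y) ∈ sliceArgmin K f := hs.mono fun y hy => (hy (s y)).2 rfl
  have hμmin : ∀ᵐ w ∂μ, w ∈ sliceArgmin K f :=
    ae_mem_sliceArgmin_of_integral_eq hK hf hsmeas hsmin hμ hμK
      (hopt.trans (isLeast_admissibleCosts hK hf hsmeas hsmin).csInf_eq)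
  refine eq_map_graph_of_ae_fst_eq hsmeas hμ ?_
  filter_upwards [hμmin, hμ.quasiMeasurePreserving.ae hs] with w hw hsw
  exact (hsw w.1).1 hw

theorem stmt5_general {E : Type*} [NormedAddCommGroup E] [NormedSpace ℝ E] {S : Set Y}
    (hK : IsCompact K) (hf : ContinuousOn f K) (hφS : ∀ᵐ y ∂φ, y ∈ S)
    (hs : ∀ᵐ y ∂φ, {x | (x, y) ∈ K ∧ f (x, y) = valueFunction K f y} = {s y})
    {g : X → E} (hg : StronglyMeasurable g) (hμ : MeasurePreserving Prod.snd μ φ)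
    (hμK : ∀ᵐ w ∂μ, w ∈ K) (hopt : ∫ w in K, f w ∂μ = sInf (admissibleCosts K f φ)) :
    ∫ y in S, g (s y) ∂φ = ∫ w in K, g w.1 ∂μ := by
  have hunique : ∀ᵐ y ∂φ, ∀ x, (x, y) ∈ sliceArgmin K f ↔ x = s y := hs.mono fun y hy x =>
    (mk_mem_sliceArgmin_iff hK hf.lowerSemicontinuousOn).trans (Set.ext_iff.1 hy x)
  rw [Measure.restrict_eq_self_of_ae_mem hμK] at hopt ⊢
  rw [Measure.restrict_eq_self_of_ae_mem hφS,
    eq_map_graph_of_integral_eq_sInf_admissibleCosts hK hf hunique hμ hμK hopt]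
  have hsmeas : AEMeasurable s φ :=
    aemeasurable_of_unique_sliceArgmin hK hf.lowerSemicontinuousOn hunique
  exact (integral_map (hsmeas.prodMk aemeasurable_id')
    (hg.comp_measurable measurable_fst).aestronglyMeasurable).symm

end UniqueMinimizer

/-- for `φ`-a.e. unique minimizers, any measurable functional `h` of the
optimal solutions can be computed from any optimal `μ*`. -/
theorem stmt5 (q : ℕ) (n p m : ℕ)
    (Y : Set (Fin p → ℝ)) (hYc : IsCompact Y)
    (f : (Fin n → ℝ) × (Fin p → ℝ) → ℝ) (hf : Continuous f)
    (h : Fin m → (Fin n → ℝ) × (Fin p → ℝ) → ℝ) (hh : ∀ j, Continuous (h j))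
    (K : Set ((Fin n → ℝ) × (Fin p → ℝ)))
    (hKdef : K = {w | w.2 ∈ Y ∧ ∀ j, 0 ≤ h j w}) (hKc : IsCompact K)
    (Ky : (Fin p → ℝ) → Set (Fin n → ℝ))
    (hKy : ∀ y, Ky y = {x | ∀ j, 0 ≤ h j (x, y)})
    (hne : ∀ y ∈ Y, (Ky y).Nonempty)
    (J : (Fin p → ℝ) → ℝ)
    (hJ : ∀ y, J y = sInf ((fun x => f (x, y)) '' Ky y))
    (Xstar : (Fin p → ℝ) → Set (Fin n → ℝ))
    (hXs : ∀ y, Xstar y = {x ∈ Ky y | f (x, y) = J y})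
    (φ : Measure (Fin p → ℝ)) [IsProbabilityMeasure φ] (hφY : φ Yᶜ = 0)
    (ρ : ℝ)
    (hρ : ρ = sInf {r | ∃ μ : Measure ((Fin n → ℝ) × (Fin p → ℝ)),
      IsFiniteMeasure μ ∧ μ Kᶜ = 0 ∧ μ.map Prod.snd = φ ∧ r = ∫ w in K, f w ∂μ})
    (xstar : (Fin p → ℝ) → (Fin n → ℝ))
    (hxu : ∀ᵐ y ∂φ, Xstar y = {xstar y})
    (g : (Fin n → ℝ) → (Fin q → ℝ)) (hg : Measurable g)
    (μstar : Measure ((Fin n → ℝ) × (Fin p → ℝ))) (hμfin : IsFiniteMeasure μstar)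
    (hμK : μstar Kᶜ = 0) (hμmarg : μstar.map Prod.snd = φ)
    (hμopt : ∫ w in K, f w ∂μstar = ρ) :
    ∫ y in Y, g (xstar y) ∂φ = ∫ w in K, g w.1 ∂μstar := by
  refine stmt5_general hKc hf.continuousOn hφY ?_ hg.stronglyMeasurable ⟨measurable_snd, hμmarg⟩ hμK
    (hμopt.trans hρ)
  filter_upwards [hxu, hφY] with y hy (hyY : y ∈ Y)
  simpa [valueFunction, hXs, hJ, hKy, hKdef, hyY] using hy
end

section
/- Suppose Y ⊂ ℝ^p and K are compact. Then there is no duality gap between the primal and the polynomial dual: ρ = ρ*, where ρ* = sup{ ∫_Y p dφ : p a real polynomial in the variables y with f(x,y) − p(y) ≥ 0 for all (x,y) ∈ K }. -/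
open MeasureTheory Set TopologicalSpace Filter Topology

/-!
Pulling a test function `q` back along the projection `π` and integrating it against `φ` gives a
functional on the functions `q ∘ π` that is nonnegative wherever `q ∘ π ≥ 0` on `K`. Since the
constants are test functions, M. Riesz's extension theorem prolongs it to a positive functional on
`C(K)`, and the value at `f` may be prescribed to be the dual supremum. By the
Riesz–Markov–Kakutani theorem the extension is integration against a measure `μ` on `K`. The
marginal of `μ` and `φ` have the same integrals against the test functions, hence are equal by
Stone–Weierstrass, so `μ` is primal feasible and attains the dual value; weak duality is the
integration of `q ∘ π ≤ f`.
-/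

section PositiveExtension

variable {V E : Type*} [AddCommGroup V] [Module ℝ V] [AddCommGroup E] [PartialOrder E]
  [IsOrderedAddMonoid E] [Module ℝ E] [PosSMulMono ℝ E]

theorem exists_positiveLinearMap_comp_eq (T : V →ₗ[ℝ] E) (I : V →ₗ[ℝ] ℝ)
    (hI : ∀ v, 0 ≤ T v → 0 ≤ I v) (hT : ∀ x, ∃ v, x ≤ T v) :
    ∃ L : E →ₚ[ℝ] ℝ, ∀ v, L (T v) = I v := by
  have hker : I ∈ (LinearMap.ker T).dualAnnihilator := by
    refine (Submodule.mem_dualAnnihilator I).2 fun v hv => le_antisymm ?_ (hI v hv.ge)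
    simpa using hI (-v) (by simp [LinearMap.mem_ker.1 hv])
  rw [← LinearMap.range_dualMap_eq_dualAnnihilator_ker] at hker
  obtain ⟨J, rfl⟩ := hker
  obtain ⟨L, hLJ, hL⟩ := riesz_extension (PointedCone.positive ℝ E)
    (J.toPMap (LinearMap.range T))
    (by rintro ⟨-, v, rfl⟩ hv; exact hI v hv)
    (fun y => by
      obtain ⟨v, hv⟩ := hT (-y)
      exact ⟨⟨T v, v, rfl⟩, neg_le_iff_add_nonneg.1 hv⟩)
  exact ⟨PositiveLinearMap.mk₀ L hL, fun v => hLJ ⟨T v, v, rfl⟩⟩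

theorem nonneg_add_mul_of_isLUB {T : V →ₗ[ℝ] E} {I : V →ₗ[ℝ] ℝ}
    (hI : ∀ v, 0 ≤ T v → 0 ≤ I v) {g : E} {d : ℝ} (hd : IsLUB {r | ∃ v, T v ≤ g ∧ r = I v} d)
    {v : V} {c : ℝ} (hv : 0 ≤ T v + c • g) : 0 ≤ I v + c * d := by
  rcases lt_trichotomy c 0 with hc | rfl | hc
  · have hle : d ≤ I v / -c := by
      refine hd.2 ?_
      rintro r ⟨w, hw, rfl⟩
      have hvw : 0 ≤ T (v + c • w) := by
        rw [map_add, map_smul]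
        exact hv.trans (add_le_add le_rfl (smul_le_smul_of_nonpos_left hw hc.le))
      have hIvw : 0 ≤ I v + c * I w := by simpa using hI _ hvw
      rw [le_div_iff₀ (neg_pos.2 hc)]
      linarith
    rw [le_div_iff₀ (neg_pos.2 hc)] at hle
    linarith
  · simpa using hI v (by simpa using hv)
  · have hvg : T (-(c⁻¹ • v)) ≤ g := by
      rw [map_neg, map_smul, neg_le_iff_add_nonneg', ← inv_smul_smul₀ hc.ne' g, ← smul_add]
      exact smul_nonneg (inv_nonneg.2 hc.le) hv
    have hle : -(c⁻¹ * I v) ≤ d := hd.1 ⟨-(c⁻¹ • v), hvg, by simp⟩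
    calc 0 ≤ c * (c⁻¹ * I v + d) := mul_nonneg hc.le (by linarith)
      _ = I v + c * d := by rw [mul_add, mul_inv_cancel_left₀ hc.ne']

theorem exists_positiveLinearMap_comp_eq_isLUB (T : V →ₗ[ℝ] E) (I : V →ₗ[ℝ] ℝ)
    (hI : ∀ v, 0 ≤ T v → 0 ≤ I v) (hT : ∀ x, ∃ v, x ≤ T v) (g : E) :
    ∃ L : E →ₚ[ℝ] ℝ, (∀ v, L (T v) = I v) ∧ IsLUB {r | ∃ v, T v ≤ g ∧ r = I v} (L g) := by
  have hne : {r | ∃ v, T v ≤ g ∧ r = I v}.Nonempty := by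
    obtain ⟨v, hv⟩ := hT (-g)
    exact ⟨_, -v, by simpa using neg_le.1 hv, rfl⟩
  have hbdd : BddAbove {r | ∃ v, T v ≤ g ∧ r = I v} := by
    obtain ⟨u, hu⟩ := hT g
    refine ⟨I u, ?_⟩
    rintro r ⟨v, hv, rfl⟩
    simpa using hI (u - v) (by simpa using hv.trans hu)
  set d := sSup {r | ∃ v, T v ≤ g ∧ r = I v}
  have hd : IsLUB {r | ∃ v, T v ≤ g ∧ r = I v} d := isLUB_csSup hne hbdd
  obtain ⟨L, hL⟩ := exists_positiveLinearMap_comp_eq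
    (T.coprod (LinearMap.toSpanSingleton ℝ E g)) (I.coprod (LinearMap.toSpanSingleton ℝ ℝ d))
    (fun w hw => by simpa using nonneg_add_mul_of_isLUB hI hd (by simpa using hw))
    (fun x => (hT x).imp' (fun v => (v, 0)) fun v hv => by simpa using hv)
  have hLT (v : V) : L (T v) = I v := by simpa using hL (v, 0)
  have hLg : L g = d := by simpa using hL (0, 1)
  exact ⟨L, hLT, hLg ▸ hd⟩

end PositiveExtension

theorem exists_measure_integral_eq_of_positiveLinearMap {X : Type*} [TopologicalSpace X]
    [CompactSpace X] [T2Space X] [MeasurableSpace X] [BorelSpace X] (L : C(X, ℝ) →ₚ[ℝ] ℝ) :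
    ∃ μ : Measure X, IsFiniteMeasure μ ∧ ∀ g : C(X, ℝ), ∫ x, g x ∂μ = L g := by
  let Λ : CompactlySupportedContinuousMap X ℝ →ₚ[ℝ] ℝ := PositiveLinearMap.mk₀
    { toFun := fun g => L g.toContinuousMap
      map_add' := fun a b => map_add L a.toContinuousMap b.toContinuousMap
      map_smul' := fun c a => map_smul L c a.toContinuousMap }
    fun _ hg => L.map_nonneg hg
  exact ⟨RealRMK.rieszMeasure Λ, inferInstance, fun g =>
    RealRMK.integral_rieszMeasure Λ (CompactlySupportedContinuousMap.continuousMapEquiv g)⟩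

section CompactlyCarried

variable {Z : Type*} [TopologicalSpace Z] [T2Space Z] [MeasurableSpace Z] {S : Set Z}

theorem integrable_of_continuousOn_of_ae_mem_isCompact [OpensMeasurableSpace Z] {μ : Measure Z}
    [IsFiniteMeasureOnCompacts μ] {u : Z → ℝ} (hu : ContinuousOn u S) (hS : IsCompact S)
    (hμ : ∀ᵐ z ∂μ, z ∈ S) : Integrable u μ :=
  Measure.restrict_eq_self_of_ae_mem hμ ▸ hu.integrableOn_compact hS

theorem dist_integral_le_of_ae_mem_isCompact [OpensMeasurableSpace Z] {μ : Measure Z}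
    [IsFiniteMeasure μ] {u v : Z → ℝ} (hu : ContinuousOn u S) (hv : ContinuousOn v S)
    (hS : IsCompact S) (hμ : ∀ᵐ z ∂μ, z ∈ S) {δ : ℝ} (huv : ∀ z ∈ S, dist (u z) (v z) ≤ δ) :
    dist (∫ z, u z ∂μ) (∫ z, v z ∂μ) ≤ δ * μ.real univ := by
  rw [dist_eq_norm, ← integral_sub (integrable_of_continuousOn_of_ae_mem_isCompact hu hS hμ)
    (integrable_of_continuousOn_of_ae_mem_isCompact hv hS hμ)]
  refine norm_integral_le_of_norm_le_const (hμ.mono fun z hz => ?_)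
  rw [← dist_eq_norm]
  exact huv z hz

theorem ext_of_forall_mem_subalgebra_integral_eq_of_isCompact [HasOuterApproxClosed Z]
    [BorelSpace Z] {A : Subalgebra ℝ C(Z, ℝ)} (hA : A.SeparatesPoints) (hS : IsCompact S)
    {μ ν : Measure Z} [IsFiniteMeasure μ] [IsFiniteMeasure ν]
    (hμ : ∀ᵐ z ∂μ, z ∈ S) (hν : ∀ᵐ z ∂ν, z ∈ S)
    (h : ∀ q ∈ A, ∫ z, q z ∂μ = ∫ z, q z ∂ν) : μ = ν := by
  refine ext_of_forall_integral_eq_of_IsFiniteMeasure fun u => eq_of_forall_dist_le fun ε hε => ?_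
  set M := μ.real univ + ν.real univ + 1
  have hM : 0 < M := by positivity
  obtain ⟨q, hqA, hq⟩ :=
    ContinuousMap.exists_mem_subalgebra_near_continuous_of_isCompact_of_separatesPoints
      hA u.toContinuousMap hS (div_pos hε hM)
  have hqu (z : Z) (hz : z ∈ S) : dist (q z) (u z) ≤ ε / M := (hq z hz).le
  have huq (z : Z) (hz : z ∈ S) : dist (u z) (q z) ≤ ε / M := dist_comm (u z) (q z) ▸ hqu z hz
  have hu : ContinuousOn u S := u.continuous.continuousOn
  have hqS : ContinuousOn q S := q.continuous.continuousOn
  calc dist (∫ z, u z ∂μ) (∫ z, u z ∂ν)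
      ≤ dist (∫ z, u z ∂μ) (∫ z, q z ∂μ) + dist (∫ z, q z ∂ν) (∫ z, u z ∂ν) :=
        h q hqA ▸ dist_triangle _ _ _
    _ ≤ ε / M * μ.real univ + ε / M * ν.real univ :=
        add_le_add (dist_integral_le_of_ae_mem_isCompact hu hqS hS hμ huq)
          (dist_integral_le_of_ae_mem_isCompact hqS hu hS hν hqu)
    _ = ε / M * (M - 1) := by ring
    _ ≤ ε / M * M := by gcongr; linarith
    _ = ε := div_mul_cancel₀ ε hM.ne'

end CompactlyCarried

theorem integral_map_le_integral_of_le_on {X : Type*} [TopologicalSpace X] [T2Space X]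
    [MeasurableSpace X] [OpensMeasurableSpace X] {Z : Type*} [TopologicalSpace Z]
    [MeasurableSpace Z] [BorelSpace Z] {K : Set X} (hK : IsCompact K) {π : X → Z}
    (hπ : Continuous π) {f : X → ℝ} (hf : ContinuousOn f K) {μ : Measure X}
    [IsFiniteMeasureOnCompacts μ] (hμ : ∀ᵐ x ∂μ, x ∈ K) {u : C(Z, ℝ)}
    (hu : ∀ x ∈ K, u (π x) ≤ f x) : ∫ z, u z ∂μ.map π ≤ ∫ x, f x ∂μ := by
  have huπ : ContinuousOn (fun x => u (π x)) K := (u.continuous.comp hπ).continuousOn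
  rw [integral_map hπ.measurable.aemeasurable u.continuous.aestronglyMeasurable]
  exact integral_mono_ae (integrable_of_continuousOn_of_ae_mem_isCompact huπ hK hμ)
    (integrable_of_continuousOn_of_ae_mem_isCompact hf hK hμ) (hμ.mono hu)

/-- Integration against `μ` as a linear functional on the continuous functions, for a measure `μ`
integrating all of them (for instance a finite measure carried by a compact set). The duality
theorem prolongs its values on the dual test functions to a positive functional. -/
noncomputable def integralLinearMap {Z : Type*} [TopologicalSpace Z] [MeasurableSpace Z]
    (μ : Measure Z) (hμ : ∀ u : C(Z, ℝ), Integrable u μ) : C(Z, ℝ) →ₗ[ℝ] ℝ where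
  toFun u := ∫ z, u z ∂μ
  map_add' u v := integral_add (hμ u) (hμ v)
  map_smul' c u := integral_const_mul c u

/-- The algebra homomorphism sending a real polynomial with variables in `σ` to the continuous
function it defines on `σ → ℝ`; it makes polynomials the test functions of the dual problem. -/
noncomputable def mvPolynomialToContinuousMap (σ : Type*) :
    MvPolynomial σ ℝ →ₐ[ℝ] C(σ → ℝ, ℝ) where
  toFun q := ⟨fun y => MvPolynomial.eval y q, MvPolynomial.continuous_eval q⟩
  map_one' := by ext; simp
  map_mul' _ _ := by ext; simp
  map_zero' := by ext; simp
  map_add' _ _ := by ext; simp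
  commutes' _ := by ext; simp

theorem separatesPoints_range_mvPolynomialToContinuousMap (σ : Type*) :
    (mvPolynomialToContinuousMap σ).range.SeparatesPoints := by
  intro y z hyz
  obtain ⟨i, hi⟩ := Function.ne_iff.1 hyz
  exact ⟨_, ⟨_, ⟨MvPolynomial.X i, rfl⟩, rfl⟩, by simpa [mvPolynomialToContinuousMap] using hi⟩

theorem image_snd_setOf_mem_and {α β : Type*} {Y : Set β} {P : α × β → Prop}
    (hP : ∀ y ∈ Y, {x | P (x, y)}.Nonempty) : Prod.snd '' {w | w.2 ∈ Y ∧ P w} = Y :=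
  (image_subset_iff.2 fun _ hw => hw.1).antisymm fun y hy =>
    let ⟨x, hx⟩ := hP y hy
    ⟨(x, y), ⟨hy, hx⟩, rfl⟩

section Duality

variable {X Z B : Type*} [TopologicalSpace X] [T2Space X] [MeasurableSpace X] [BorelSpace X]
  [TopologicalSpace Z] [T2Space Z] [HasOuterApproxClosed Z] [MeasurableSpace Z] [BorelSpace Z]
  [Ring B] [Algebra ℝ B]

theorem exists_measure_map_eq_isLUB_integral [CompactSpace X] (Φ : B →ₐ[ℝ] C(Z, ℝ))
    (hΦ : Φ.range.SeparatesPoints) (π : C(X, Z)) {φ : Measure Z} [IsFiniteMeasure φ]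
    (hφ : ∀ᵐ z ∂φ, z ∈ range π) (g : C(X, ℝ)) :
    ∃ μ : Measure X, IsFiniteMeasure μ ∧ μ.map π = φ ∧
      IsLUB {r | ∃ q, (∀ x, Φ q (π x) ≤ g x) ∧ r = ∫ z, Φ q z ∂φ} (∫ x, g x ∂μ) := by
  have hrange : IsCompact (range π) := isCompact_range π.continuous
  let T : B →ₗ[ℝ] C(X, ℝ) := ((ContinuousMap.compRightAlgHom ℝ ℝ π).comp Φ).toLinearMap
  have hint (u : C(Z, ℝ)) : Integrable u φ :=
    integrable_of_continuousOn_of_ae_mem_isCompact u.continuous.continuousOn hrange hφ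
  let I : B →ₗ[ℝ] ℝ := integralLinearMap φ hint ∘ₗ Φ.toLinearMap
  have hI (q : B) (hq : 0 ≤ T q) : 0 ≤ I q :=
    integral_nonneg_of_ae (hφ.mono fun _ ⟨x, hx⟩ => hx ▸ hq x)
  have hT (u : C(X, ℝ)) : ∃ q, u ≤ T q :=
    ⟨algebraMap ℝ B ‖u‖, fun x => by
      simpa [T] using (le_abs_self (u x)).trans (u.norm_coe_le_norm x)⟩
  obtain ⟨L, hLT, hLg⟩ := exists_positiveLinearMap_comp_eq_isLUB T I hI hT g
  obtain ⟨μ, hμfin, hμ⟩ := exists_measure_integral_eq_of_positiveLinearMap L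
  have hmap : μ.map π = φ := by
    refine ext_of_forall_mem_subalgebra_integral_eq_of_isCompact hΦ hrange
      ((ae_map_iff π.measurable.aemeasurable hrange.measurableSet).2 (.of_forall mem_range_self))
      hφ ?_
    rintro - ⟨q, rfl⟩
    calc ∫ z, Φ q z ∂μ.map π
        = ∫ x, Φ q (π x) ∂μ :=
          integral_map π.measurable.aemeasurable (Φ q).continuous.aestronglyMeasurable
      _ = L (T q) := hμ (T q)
      _ = ∫ z, Φ q z ∂φ := hLT q
  exact ⟨μ, hμfin, hmap, hμ g ▸ hLg⟩

theorem stmt6_general (Φ : B →ₐ[ℝ] C(Z, ℝ)) (hΦ : Φ.range.SeparatesPoints) {K : Set X}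
    (hK : IsCompact K) {π : X → Z} (hπ : Continuous π) {f : X → ℝ} (hf : ContinuousOn f K)
    {φ : Measure Z} [IsFiniteMeasure φ] (hφ : φ (π '' K)ᶜ = 0) :
    ∃ r, IsLeast {r | ∃ μ : Measure X,
        IsFiniteMeasure μ ∧ μ Kᶜ = 0 ∧ μ.map π = φ ∧ r = ∫ x in K, f x ∂μ} r ∧
      IsLUB {r | ∃ q, (∀ x ∈ K, Φ q (π x) ≤ f x) ∧ r = ∫ z in π '' K, Φ q z ∂φ} r := by
  have : CompactSpace K := isCompact_iff_compactSpace.1 hK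
  have hemb : MeasurableEmbedding ((↑) : K → X) := .subtype_coe hK.measurableSet
  let πK : C(K, Z) := ⟨fun x => π x, by fun_prop⟩
  let fK : C(K, ℝ) := ⟨fun x => f x, hf.domRestrict⟩
  have hφS : ∀ᵐ z ∂φ, z ∈ π '' K := hφ
  have hφK : ∀ᵐ z ∂φ, z ∈ range πK := image_eq_range π K ▸ hφS
  obtain ⟨ν, hνfin, hνφ, hνlub⟩ := exists_measure_map_eq_isLUB_integral Φ hΦ πK hφK fK
  have hlub : IsLUB {r | ∃ q, (∀ x ∈ K, Φ q (π x) ≤ f x) ∧ r = ∫ z in π '' K, Φ q z ∂φ}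
      (∫ x, fK x ∂ν) := by
    rw [Measure.restrict_eq_self_of_ae_mem hφS]
    simp only [Subtype.forall] at hνlub
    exact hνlub
  refine ⟨_, ⟨⟨ν.map (↑), inferInstance, ?_, ?_, ?_⟩, ?_⟩, hlub⟩
  · rw [hemb.map_apply, preimage_compl, Subtype.coe_preimage_self, compl_univ, measure_empty]
  · rwa [Measure.map_map hπ.measurable measurable_subtype_coe]
  · rw [hemb.setIntegral_map, Subtype.coe_preimage_self, Measure.restrict_univ]
    rfl
  · rintro r ⟨μ, hμfin, hμK, rfl, rfl⟩
    refine hνlub.2 ?_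
    rintro r ⟨q, hq, rfl⟩
    rw [Measure.restrict_eq_self_of_ae_mem hμK]
    exact integral_map_le_integral_of_le_on hK hπ hf hμK fun x hx => hq ⟨x, hx⟩

end Duality

/-- no duality gap between `P` and its polynomial dual `P*`. -/
theorem stmt6 (n p m : ℕ)
    (Y : Set (Fin p → ℝ)) (hYc : IsCompact Y)
    (f : (Fin n → ℝ) × (Fin p → ℝ) → ℝ) (hf : Continuous f)
    (h : Fin m → (Fin n → ℝ) × (Fin p → ℝ) → ℝ) (hh : ∀ j, Continuous (h j))
    (K : Set ((Fin n → ℝ) × (Fin p → ℝ)))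
    (hKdef : K = {w | w.2 ∈ Y ∧ ∀ j, 0 ≤ h j w}) (hKc : IsCompact K)
    (Ky : (Fin p → ℝ) → Set (Fin n → ℝ))
    (hKy : ∀ y, Ky y = {x | ∀ j, 0 ≤ h j (x, y)})
    (hne : ∀ y ∈ Y, (Ky y).Nonempty)
    (J : (Fin p → ℝ) → ℝ)
    (hJ : ∀ y, J y = sInf ((fun x => f (x, y)) '' Ky y))
    (φ : Measure (Fin p → ℝ)) [IsProbabilityMeasure φ] (hφY : φ Yᶜ = 0)
    (ρ : ℝ)
    (hρ : ρ = sInf {r | ∃ μ : Measure ((Fin n → ℝ) × (Fin p → ℝ)),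
      IsFiniteMeasure μ ∧ μ Kᶜ = 0 ∧ μ.map Prod.snd = φ ∧ r = ∫ w in K, f w ∂μ})
    (ρstar : ℝ)
    (hρstar : ρstar = sSup {r | ∃ q : MvPolynomial (Fin p) ℝ,
      (∀ w ∈ K, MvPolynomial.eval w.2 q ≤ f w) ∧
      r = ∫ y in Y, MvPolynomial.eval y q ∂φ}) :
    ρ = ρstar := by
  obtain rfl : Prod.snd '' K = Y :=
    hKdef ▸ image_snd_setOf_mem_and fun y hy => by simpa only [hKy] using hne y hy
  obtain ⟨r, hP, hD⟩ := stmt6_general (mvPolynomialToContinuousMap (Fin p))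
    (separatesPoints_range_mvPolynomialToContinuousMap _) hKc continuous_snd hf.continuousOn hφY
  rw [hρ, hρstar]
  exact hP.csInf_eq.trans (hD.csSup_eq hD.nonempty).symm
end

section
/- Suppose Y ⊂ ℝ^p and K are compact and K_y is nonempty for every y ∈ Y. Let (p_i)_{i∈ℕ} be polynomials in ℝ[y] with f(x,y) − p_i(y) ≥ 0 on K for all i and ∫_Y p_i dφ → ρ* := sup{ ∫_Y p dφ : p ∈ ℝ[y], f − p ≥ 0 on K }. Then p_i(y) ≤ J(y) for all y ∈ Y and ∫_Y |J(y) − p_i(y)| dφ(y) → 0 as i → ∞. -/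
open MeasureTheory Set TopologicalSpace Filter Topology

/-!
A polynomial `q` satisfies `q(y) ≤ f(x, y)` on `K` exactly when it lies below the value function
`J`. Since `K` is compact, `J` is lower semicontinuous, hence the pointwise limit from below of its
Pasch–Hausdorff envelopes and, by Stone–Weierstrass, of polynomials below `J`. Dominated convergence
then shows that there is no duality gap, `ρ* = ∫ J dφ`, and for functions `u ≤ J` the `L¹` distance
to `J` is just `∫ J - ∫ u`.
-/

open scoped NNReal

section LipschitzEnvelope

variable {E : Type*} [PseudoMetricSpace E] {S : Set E} {g : E → ℝ} {c : ℝ} {k : ℝ≥0} {y : E}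

/-- The Pasch–Hausdorff envelope of `g` on `S`: the largest `k`-Lipschitz function lying below `g`
on `S`, when `S` is nonempty and such a function exists. It serves to approximate a lower
semicontinuous function by continuous ones from below. -/
noncomputable def lipschitzEnvelope (g : E → ℝ) (S : Set E) (k : ℝ≥0) (y : E) : ℝ :=
  ⨅ z : S, (g z + k * dist (z : E) y)

lemma bddBelow_range_add_mul_dist (hg : BddBelow (g '' S)) (k : ℝ≥0) (y : E) :
    BddBelow (range fun z : S => g z + k * dist (z : E) y) := by
  obtain ⟨c, hc⟩ := hg
  refine ⟨c, forall_mem_range.2 fun z => ?_⟩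
  exact (hc (mem_image_of_mem g z.2)).trans (le_add_of_nonneg_right (by positivity))

lemma lipschitzEnvelope_le (hg : BddBelow (g '' S)) (hy : y ∈ S) :
    lipschitzEnvelope g S k y ≤ g y :=
  (ciInf_le (bddBelow_range_add_mul_dist hg k y) ⟨y, hy⟩).trans_eq (by simp)

lemma le_lipschitzEnvelope (hS : S.Nonempty) (hc : ∀ z ∈ S, c ≤ g z + k * dist z y) :
    c ≤ lipschitzEnvelope g S k y :=
  have := hS.to_subtype
  le_ciInf fun z => hc z z.2

lemma lipschitzWith_lipschitzEnvelope (hg : BddBelow (g '' S)) (k : ℝ≥0) :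
    LipschitzWith k (lipschitzEnvelope g S k) := by
  rcases S.eq_empty_or_nonempty with rfl | hS
  · have hzero : lipschitzEnvelope g ∅ k = fun _ => 0 := funext fun _ => Real.iInf_of_isEmpty _
    exact hzero ▸ (LipschitzWith.const 0).weaken zero_le
  refine LipschitzWith.of_le_add_mul k fun x y => ?_
  rw [← sub_le_iff_le_add]
  refine le_lipschitzEnvelope hS fun z hz => sub_le_iff_le_add.2 ?_
  calc lipschitzEnvelope g S k x
      ≤ g z + k * dist z x := ciInf_le (bddBelow_range_add_mul_dist hg k x) ⟨z, hz⟩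
    _ ≤ g z + k * (dist z y + dist x y) := by gcongr; exact dist_triangle_right z x y
    _ = g z + k * dist z y + k * dist x y := by ring

lemma tendsto_lipschitzEnvelope (hg : BddBelow (g '' S)) (hlsc : LowerSemicontinuousWithinAt g S y)
    (hy : y ∈ S) : Tendsto (fun k => lipschitzEnvelope g S k y) atTop (𝓝 (g y)) := by
  refine tendsto_order.2 ⟨fun a ha => ?_,
    fun a ha => .of_forall fun k => (lipschitzEnvelope_le hg hy).trans_lt ha⟩
  obtain ⟨m, hm⟩ := hg
  obtain ⟨c, hac, hc⟩ := exists_between ha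
  obtain ⟨δ, hδ, hball⟩ := Metric.mem_nhdsWithin_iff.1 (hlsc c hc)
  filter_upwards [eventually_ge_atTop ((c - m) / δ).toNNReal] with k hk
  have hkδ : c - m ≤ k * δ := (div_le_iff₀ hδ).1 (Real.toNNReal_le_iff_le_coe.1 hk)
  refine hac.trans_le (le_lipschitzEnvelope ⟨y, hy⟩ fun z hz => ?_)
  rcases lt_or_ge (dist z y) δ with hnear | hfar
  · exact (hball ⟨hnear, hz⟩).le.trans (le_add_of_nonneg_right (by positivity))
  · calc c ≤ m + k * δ := by linarith
      _ ≤ g z + k * dist z y := by gcongr; exact hm (mem_image_of_mem g hz)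

end LipschitzEnvelope

lemma exists_seq_continuous_tendsto {E : Type*} [TopologicalSpace E] [PseudoMetrizableSpace E]
    {S : Set E} {g : E → ℝ} (hbdd : BddBelow (g '' S)) (hg : LowerSemicontinuousOn g S) :
    ∃ (u : ℕ → E → ℝ) (m : ℝ), (∀ k, Continuous (u k)) ∧ (∀ k, ∀ y ∈ S, u k y ∈ Icc m (g y)) ∧
      ∀ y ∈ S, Tendsto (fun k => u k y) atTop (𝓝 (g y)) := by
  let := pseudoMetrizableSpacePseudoMetric E
  have ⟨m, hm⟩ := hbdd
  refine ⟨fun k => lipschitzEnvelope g S k, m,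
    fun k => (lipschitzWith_lipschitzEnvelope hbdd k).continuous,
    fun k y hy => ⟨le_lipschitzEnvelope ⟨y, hy⟩ fun z hz => ?_, lipschitzEnvelope_le hbdd hy⟩,
    fun y hy => (tendsto_lipschitzEnvelope hbdd (hg y hy) hy).comp tendsto_natCast_atTop_atTop⟩
  exact (hm (mem_image_of_mem g hz)).trans (le_add_of_nonneg_right (by positivity))

section PolynomialApproximation

variable {σ : Type*} {S : Set (σ → ℝ)} {g : (σ → ℝ) → ℝ} {ε : ℝ}

lemma exists_mvPolynomial_near (hS : IsCompact S) (hg : Continuous g) (hε : 0 < ε) :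
    ∃ q : MvPolynomial σ ℝ, ∀ y ∈ S, |MvPolynomial.eval y q - g y| < ε := by
  let coord (i : σ) : C(σ → ℝ, ℝ) := ⟨fun y => y i, continuous_apply i⟩
  let toFun : MvPolynomial σ ℝ →ₐ[ℝ] C(σ → ℝ, ℝ) := MvPolynomial.aeval coord
  have toFun_apply (q : MvPolynomial σ ℝ) (y : σ → ℝ) : toFun q y = MvPolynomial.eval y q := by
    induction q using MvPolynomial.induction_on with
    | C a => simp [toFun]
    | add q r hq hr => simp [hq, hr]
    | mul_X q i hq => simp [hq, toFun, coord]
  have separates : toFun.range.SeparatesPoints := by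
    intro x y hxy
    obtain ⟨i, hi⟩ := Function.ne_iff.1 hxy
    exact ⟨_, ⟨_, ⟨MvPolynomial.X i, rfl⟩, rfl⟩, by simpa [toFun_apply] using hi⟩
  obtain ⟨_, ⟨q, rfl⟩, hq⟩ :=
    ContinuousMap.exists_mem_subalgebra_near_continuous_of_isCompact_of_separatesPoints
      separates ⟨g, hg⟩ hS hε
  exact ⟨q, fun y hy => toFun_apply q y ▸ hq y hy⟩

lemma exists_mvPolynomial_mem_Icc (hS : IsCompact S) (hg : Continuous g) (hε : 0 < ε) :
    ∃ q : MvPolynomial σ ℝ, ∀ y ∈ S, MvPolynomial.eval y q ∈ Icc (g y - ε) (g y) := by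
  obtain ⟨q, hq⟩ := exists_mvPolynomial_near (g := fun y => g y - ε / 2) hS (by fun_prop)
    (half_pos hε)
  refine ⟨q, fun y hy => ?_⟩
  obtain ⟨hlo, hhi⟩ := abs_lt.1 (hq y hy)
  constructor <;> linarith

variable [Countable σ]

lemma exists_seq_mvPolynomial_tendsto (hS : IsCompact S) (hg : LowerSemicontinuousOn g S) :
    ∃ (q : ℕ → MvPolynomial σ ℝ) (m : ℝ),
      (∀ k, ∀ y ∈ S, MvPolynomial.eval y (q k) ∈ Icc m (g y)) ∧
      ∀ y ∈ S, Tendsto (fun k => MvPolynomial.eval y (q k)) atTop (𝓝 (g y)) := by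
  obtain ⟨u, m, hu_cont, hu_mem, hu_lim⟩ :=
    exists_seq_continuous_tendsto (hg.bddBelow_of_isCompact hS) hg
  have hex (k : ℕ) := exists_mvPolynomial_mem_Icc hS (hu_cont k) (Nat.one_div_pos_of_nat (n := k))
  choose q hq using hex
  refine ⟨q, m - 1, fun k y hy => ⟨?_, (hq k y hy).2.trans (hu_mem k y hy).2⟩, fun y hy => ?_⟩
  · have hε : 1 / ((k : ℝ) + 1) ≤ 1 := by simpa using Nat.one_div_le_one_div (α := ℝ) k.zero_le
    exact (sub_le_sub (hu_mem k y hy).1 hε).trans (hq k y hy).1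
  · refine tendsto_of_tendsto_of_tendsto_of_le_of_le ?_ (hu_lim y hy)
      (fun k => (hq k y hy).1) fun k => (hq k y hy).2
    simpa only [sub_zero] using (hu_lim y hy).sub tendsto_one_div_add_atTop_nhds_zero_nat

variable {φ : Measure (σ → ℝ)} [IsFiniteMeasureOnCompacts φ]

lemma integrableOn_eval_mvPolynomial (hS : IsCompact S) (q : MvPolynomial σ ℝ) :
    IntegrableOn (fun y => MvPolynomial.eval y q) S φ :=
  (MvPolynomial.continuous_eval q).continuousOn.integrableOn_compact hS

lemma exists_seq_mvPolynomial_tendsto_setIntegral (hS : IsCompact S)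
    (hg : LowerSemicontinuousOn g S) (hint : IntegrableOn g S φ) :
    ∃ q : ℕ → MvPolynomial σ ℝ, (∀ k, ∀ y ∈ S, MvPolynomial.eval y (q k) ≤ g y) ∧
      Tendsto (fun k => ∫ y in S, MvPolynomial.eval y (q k) ∂φ) atTop (𝓝 (∫ y in S, g y ∂φ)) := by
  obtain ⟨q, m, hq, hlim⟩ := exists_seq_mvPolynomial_tendsto hS hg
  refine ⟨q, fun k y hy => (hq k y hy).2, ?_⟩
  refine tendsto_integral_of_dominated_convergence (fun y => max |m| |g y|)
    (fun k => (integrableOn_eval_mvPolynomial hS (q k)).aestronglyMeasurable) ?_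
    (fun k => ae_restrict_of_forall_mem hS.measurableSet fun y hy =>
      abs_le_max_abs_abs (hq k y hy).1 (hq k y hy).2)
    (ae_restrict_of_forall_mem hS.measurableSet hlim)
  exact (continuousOn_const.integrableOn_compact hS).sup hint.abs

theorem sSup_setIntegral_mvPolynomial_le (hS : IsCompact S)
    (hg : LowerSemicontinuousOn g S) (hint : IntegrableOn g S φ) :
    sSup {r | ∃ q : MvPolynomial σ ℝ, (∀ y ∈ S, MvPolynomial.eval y q ≤ g y) ∧
      r = ∫ y in S, MvPolynomial.eval y q ∂φ} = ∫ y in S, g y ∂φ := by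
  obtain ⟨q, hq, hlim⟩ := exists_seq_mvPolynomial_tendsto_setIntegral hS hg hint
  refine IsLUB.csSup_eq ⟨?_, fun b hb => ?_⟩ ⟨_, q 0, hq 0, rfl⟩
  · rintro _ ⟨r, hr, rfl⟩
    exact setIntegral_mono_on (integrableOn_eval_mvPolynomial hS r) hint hS.measurableSet hr
  · exact le_of_tendsto' hlim fun k => hb ⟨q k, hq k, rfl⟩

end PolynomialApproximation

section FiberwiseInf

variable {Z E : Type*} {π : Z → E} {K : Set Z} {f : Z → ℝ} {J : E → ℝ}

/-- `J` is the value function of minimizing `f` over the fibers of `π` in `K`: at every `y ∈ π '' K`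
it is the infimum of `f` on `K ∩ π ⁻¹' {y}`. Nothing is asked of `J` outside `π '' K`, where the
fibers are empty. For `π = Prod.snd` this is parametric minimization with parameter `y`. -/
def IsFiberwiseInf (π : Z → E) (K : Set Z) (f : Z → ℝ) (J : E → ℝ) : Prop :=
  ∀ y ∈ π '' K, IsGLB (f '' (K ∩ π ⁻¹' {y})) (J y)

namespace IsFiberwiseInf

lemma apply_le (hJ : IsFiberwiseInf π K f J) {w : Z} (hw : w ∈ K) : J (π w) ≤ f w :=
  (hJ _ (mem_image_of_mem π hw)).1 ⟨w, ⟨hw, rfl⟩, rfl⟩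

lemma le_apply (hJ : IsFiberwiseInf π K f J) {y : E} (hy : y ∈ π '' K) {c : ℝ}
    (hc : ∀ w ∈ K, π w = y → c ≤ f w) : c ≤ J y :=
  (hJ y hy).2 (forall_mem_image.2 fun w hw => hc w hw.1 hw.2)

lemma forall_le_iff (hJ : IsFiberwiseInf π K f J) {g : E → ℝ} :
    (∀ y ∈ π '' K, g y ≤ J y) ↔ ∀ w ∈ K, g (π w) ≤ f w :=
  ⟨fun hg w hw => (hg _ (mem_image_of_mem π hw)).trans (hJ.apply_le hw),
    fun hg _ hy => hJ.le_apply hy fun w hw => by rintro rfl; exact hg w hw⟩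

variable [TopologicalSpace Z] [TopologicalSpace E] [T2Space E]

lemma lowerSemicontinuousOn (hJ : IsFiberwiseInf π K f J) (hK : IsCompact K)
    (hπ : ContinuousOn π K) (hf : LowerSemicontinuousOn f K) :
    LowerSemicontinuousOn J (π '' K) := by
  intro y hy a ha
  obtain ⟨c, hac, hc⟩ := exists_between ha
  have hclosed : IsClosed (π '' (K ∩ f ⁻¹' Iic c)) :=
    ((hf.isCompact_inter_preimage_Iic hK c).image_of_continuousOn
      (hπ.mono inter_subset_left)).isClosed
  have hy_notMem : y ∉ π '' (K ∩ f ⁻¹' Iic c) := by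
    rintro ⟨w, ⟨hw, hwc⟩, rfl⟩
    exact (hc.trans_le (hJ.apply_le hw)).not_ge hwc
  filter_upwards [mem_nhdsWithin_of_mem_nhds (hclosed.isOpen_compl.mem_nhds hy_notMem),
    self_mem_nhdsWithin] with z hz hzK
  refine hac.trans_le (hJ.le_apply hzK fun w hw hwz => le_of_not_ge fun hwc => ?_)
  exact hz ⟨w, ⟨hw, hwc⟩, hwz⟩

lemma integrableOn [MeasurableSpace E] [OpensMeasurableSpace E] {φ : Measure E}
    [IsFiniteMeasureOnCompacts φ] (hJ : IsFiberwiseInf π K f J) (hK : IsCompact K)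
    (hπ : ContinuousOn π K) (hf : LowerSemicontinuousOn f K) (hbdd : BddAbove (f '' K)) :
    IntegrableOn J (π '' K) φ := by
  have hπK : IsCompact (π '' K) := hK.image_of_continuousOn hπ
  have hlsc := hJ.lowerSemicontinuousOn hK hπ hf
  obtain ⟨m, hm⟩ := hlsc.bddBelow_of_isCompact hπK
  obtain ⟨M, hM⟩ := hbdd
  refine IntegrableOn.of_bound hπK.measure_lt_top ?_ (max |m| |M|)
    (ae_restrict_of_forall_mem hπK.measurableSet ?_)
  · exact (aemeasurable_restrict_of_measurable_subtype hπK.measurableSet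
      (lowerSemicontinuous_restrict_iff.2 hlsc).measurable).aestronglyMeasurable
  · rintro _ ⟨w, hw, rfl⟩
    exact abs_le_max_abs_abs (hm (mem_image_of_mem J (mem_image_of_mem π hw)))
      ((hJ.apply_le hw).trans (hM (mem_image_of_mem f hw)))

end IsFiberwiseInf

end FiberwiseInf

section ParametricMinimization

variable {X E : Type*} {Y : Set E} {F : E → Set X} {f : X × E → ℝ} {J : E → ℝ}

lemma image_snd_setOf_mem (hne : ∀ y ∈ Y, (F y).Nonempty) :
    Prod.snd '' {w : X × E | w.2 ∈ Y ∧ w.1 ∈ F w.2} = Y := by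
  refine Subset.antisymm (image_subset_iff.2 fun w hw => hw.1) fun y hy => ?_
  obtain ⟨x, hx⟩ := hne y hy
  exact ⟨(x, y), ⟨hy, hx⟩, rfl⟩

lemma isFiberwiseInf_snd (hbdd : BddBelow (f '' {w | w.2 ∈ Y ∧ w.1 ∈ F w.2}))
    (hJ : ∀ y ∈ Y, J y = sInf ((fun x => f (x, y)) '' F y)) :
    IsFiberwiseInf Prod.snd {w | w.2 ∈ Y ∧ w.1 ∈ F w.2} f J := by
  rintro _ ⟨⟨x, y⟩, ⟨hy, hx⟩, rfl⟩
  have hfiber : (fun x => f (x, y)) '' F y =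
      f '' ({w | w.2 ∈ Y ∧ w.1 ∈ F w.2} ∩ Prod.snd ⁻¹' {y}) := by
    ext
    aesop
  rw [hJ y hy, hfiber]
  exact isGLB_csInf ⟨f (x, y), (x, y), ⟨⟨hy, hx⟩, rfl⟩, rfl⟩
    (hbdd.mono (image_mono inter_subset_left))

end ParametricMinimization

lemma tendsto_integral_abs_sub_of_ae_le {α ι : Type*} [MeasurableSpace α] {μ : Measure α}
    {l : Filter ι} {g : α → ℝ} {u : ι → α → ℝ} (hg : Integrable g μ) (hu : ∀ i, Integrable (u i) μ)
    (hle : ∀ i, u i ≤ᵐ[μ] g) (hlim : Tendsto (fun i => ∫ x, u i x ∂μ) l (𝓝 (∫ x, g x ∂μ))) :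
    Tendsto (fun i => ∫ x, |g x - u i x| ∂μ) l (𝓝 0) := by
  have heq (i : ι) : ∫ x, |g x - u i x| ∂μ = ∫ x, g x ∂μ - ∫ x, u i x ∂μ := by
    rw [← integral_sub hg (hu i)]
    exact integral_congr_ae ((hle i).mono fun x hx => abs_of_nonneg (sub_nonneg.2 hx))
  simpa only [heq, sub_self] using hlim.const_sub (∫ x, g x ∂μ)

theorem stmt7_general {Z σ ι : Type*} [TopologicalSpace Z] [Countable σ] {l : Filter ι}
    {K : Set Z} (hK : IsCompact K) {π : Z → σ → ℝ} (hπ : ContinuousOn π K)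
    {f : Z → ℝ} (hf : LowerSemicontinuousOn f K)
    {J : (σ → ℝ) → ℝ} (hJ : IsFiberwiseInf π K f J)
    {φ : Measure (σ → ℝ)} [IsFiniteMeasureOnCompacts φ] (hint : IntegrableOn J (π '' K) φ)
    {ps : ι → MvPolynomial σ ℝ} (hfeas : ∀ i, ∀ w ∈ K, MvPolynomial.eval (π w) (ps i) ≤ f w)
    (hmax : Tendsto (fun i => ∫ y in π '' K, MvPolynomial.eval y (ps i) ∂φ) l
      (𝓝 (sSup {r | ∃ q : MvPolynomial σ ℝ, (∀ w ∈ K, MvPolynomial.eval (π w) q ≤ f w) ∧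
        r = ∫ y in π '' K, MvPolynomial.eval y q ∂φ}))) :
    (∀ i, ∀ y ∈ π '' K, MvPolynomial.eval y (ps i) ≤ J y) ∧
    Tendsto (fun i => ∫ y in π '' K, |J y - MvPolynomial.eval y (ps i)| ∂φ) l (𝓝 0) := by
  have hπK : IsCompact (π '' K) := hK.image_of_continuousOn hπ
  have hle (i : ι) : ∀ y ∈ π '' K, MvPolynomial.eval y (ps i) ≤ J y := hJ.forall_le_iff.2 (hfeas i)
  have hdual := sSup_setIntegral_mvPolynomial_le hπK (hJ.lowerSemicontinuousOn hK hπ hf) hint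
  simp only [hJ.forall_le_iff] at hdual
  rw [hdual] at hmax
  exact ⟨hle, tendsto_integral_abs_sub_of_ae_le hint
    (fun i => integrableOn_eval_mvPolynomial hπK (ps i))
    (fun i => ae_restrict_of_forall_mem hπK.measurableSet (hle i)) hmax⟩

/-- any maximizing sequence of polynomials for the dual `P*` is a sequence
of lower approximations of `J` converging to `J` in `L¹(φ)`. -/
theorem stmt7 (n p m : ℕ)
    (Y : Set (Fin p → ℝ)) (hYc : IsCompact Y)
    (f : (Fin n → ℝ) × (Fin p → ℝ) → ℝ) (hf : Continuous f)
    (h : Fin m → (Fin n → ℝ) × (Fin p → ℝ) → ℝ) (hh : ∀ j, Continuous (h j))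
    (K : Set ((Fin n → ℝ) × (Fin p → ℝ)))
    (hKdef : K = {w | w.2 ∈ Y ∧ ∀ j, 0 ≤ h j w}) (hKc : IsCompact K)
    (Ky : (Fin p → ℝ) → Set (Fin n → ℝ))
    (hKy : ∀ y, Ky y = {x | ∀ j, 0 ≤ h j (x, y)})
    (hne : ∀ y ∈ Y, (Ky y).Nonempty)
    (J : (Fin p → ℝ) → ℝ)
    (hJ : ∀ y, J y = sInf ((fun x => f (x, y)) '' Ky y))
    (φ : Measure (Fin p → ℝ)) [IsProbabilityMeasure φ] (hφY : φ Yᶜ = 0)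
    (ρstar : ℝ)
    (hρstar : ρstar = sSup {r | ∃ q : MvPolynomial (Fin p) ℝ,
      (∀ w ∈ K, MvPolynomial.eval w.2 q ≤ f w) ∧
      r = ∫ y in Y, MvPolynomial.eval y q ∂φ})
    (ps : ℕ → MvPolynomial (Fin p) ℝ)
    (hfeas : ∀ i, ∀ w ∈ K, MvPolynomial.eval w.2 (ps i) ≤ f w)
    (hmax : Tendsto (fun i => ∫ y in Y, MvPolynomial.eval y (ps i) ∂φ) atTop (𝓝 ρstar)) :
    (∀ i, ∀ y ∈ Y, MvPolynomial.eval y (ps i) ≤ J y) ∧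
    Tendsto (fun i => ∫ y in Y, |J y - MvPolynomial.eval y (ps i)| ∂φ) atTop (𝓝 0) := by
  obtain rfl : Ky = fun y => {x | ∀ j, 0 ≤ h j (x, y)} := funext hKy
  have hY : Prod.snd '' K = Y := hKdef ▸ image_snd_setOf_mem hne
  have hlsc : LowerSemicontinuousOn f K := hf.continuousOn.lowerSemicontinuousOn
  have hinf : IsFiberwiseInf Prod.snd K f J := by
    subst hKdef
    exact isFiberwiseInf_snd (hKc.bddBelow_image hf.continuousOn) fun y _ => hJ y
  subst hY hρstar
  exact stmt7_general hKc continuousOn_snd hlsc hinf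
    (hinf.integrableOn hKc continuousOn_snd hlsc (hKc.bddAbove_image hf.continuousOn)) hfeas hmax
end

section
/- Suppose Y ⊂ ℝ^p and K are compact and, with φ a Borel probability measure on Y, the dual values satisfy: sup over continuous functions equals sup over polynomials; that is, sup{ ∫_Y h dφ : h : Y → ℝ continuous, f(x,y) − h(y) ≥ 0 for all (x,y) ∈ K } = sup{ ∫_Y p dφ : p a real polynomial in y with f(x,y) − p(y) ≥ 0 for all (x,y) ∈ K }. -/
open MeasureTheory Set TopologicalSpace Filter Topology

/-!
By Stone–Weierstrass a polynomial `q` can be chosen within `δ` of a given admissible `g` on `Y`, and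
`q - δ` is then an admissible polynomial within `2δ` of `g`. Integration over `Y` is Lipschitz for
the uniform distance, so every dual value over continuous functions is a limit of dual values over
polynomials: the two sets of values have the same closure, hence the same supremum.
-/

theorem csSup_eq_csSup_of_closure_eq {α : Type*} [ConditionallyCompleteLinearOrder α]
    [TopologicalSpace α] [ClosedIicTopology α] {s t : Set α} (hst : closure s = closure t) :
    sSup s = sSup t := by
  have hub : upperBounds s = upperBounds t := by
    rw [← upperBounds_closure s, hst, upperBounds_closure]
  rcases s.eq_empty_or_nonempty with rfl | hs
  · have ht : t = ∅ := by rwa [closure_empty, eq_comm, closure_empty_iff] at hst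
    rw [ht]
  by_cases hbdd : BddAbove s
  · have ht : t.Nonempty := closure_nonempty_iff.mp (hst ▸ hs.closure)
    have htlub : IsLUB t (sSup s) := (isLUB_congr hub).mp (isLUB_csSup hs hbdd)
    exact (htlub.csSup_eq ht).symm
  · have hbdd' : ¬BddAbove t := by rwa [BddAbove, ← hub]
    rw [csSup_of_not_bddAbove hbdd, csSup_of_not_bddAbove hbdd']

theorem dist_setIntegral_le_of_forall_mem_dist_le {α E : Type*} [MeasurableSpace α]
    [NormedAddCommGroup E] [NormedSpace ℝ E] {μ : Measure α} {s : Set α} {g k : α → E} {C : ℝ}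
    (hs : μ s < ⊤) (hg : IntegrableOn g s μ) (hk : IntegrableOn k s μ)
    (hC : ∀ x ∈ s, dist (g x) (k x) ≤ C) :
    dist (∫ x in s, g x ∂μ) (∫ x in s, k x ∂μ) ≤ C * μ.real s := by
  simp only [dist_eq_norm] at hC ⊢
  rw [← integral_sub hg hk]
  exact norm_setIntegral_le_of_norm_le_const hs hC

section MvPolynomialFunctions

variable {σ R : Type*} [CommSemiring R] [TopologicalSpace R] [IsTopologicalSemiring R]

/-- The algebra of polynomial functions on `s ⊆ R^σ`, the multivariate analogue of
`polynomialFunctions`, encoded as the range of the evaluation of polynomials at the coordinate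
functions in `C(s, R)`. -/
noncomputable def mvPolynomialFunctions (s : Set (σ → R)) : Subalgebra R C(s, R) :=
  (MvPolynomial.aeval fun i ↦ (ContinuousMap.eval i).restrict s).range

theorem exists_eval_eq_of_mem_mvPolynomialFunctions {s : Set (σ → R)} {a : C(s, R)}
    (ha : a ∈ mvPolynomialFunctions s) :
    ∃ q : MvPolynomial σ R, ∀ y : s, a y = MvPolynomial.eval y.1 q := by
  obtain ⟨q, rfl⟩ := ha
  refine ⟨q, fun y ↦ ?_⟩
  rw [← MvPolynomial.coe_aeval_eq_eval]
  exact MvPolynomial.comp_aeval_apply _ (ContinuousMap.evalAlgHom R R y) q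

theorem mvPolynomialFunctions_separatesPoints (s : Set (σ → R)) :
    (mvPolynomialFunctions s).SeparatesPoints := by
  intro x y hxy
  obtain ⟨i, hi⟩ := Function.ne_iff.mp (Subtype.coe_ne_coe.mpr hxy)
  exact ⟨_, ⟨_, ⟨MvPolynomial.X i, MvPolynomial.aeval_X _ i⟩, rfl⟩, hi⟩

end MvPolynomialFunctions

section Approximation

variable {σ : Type*} {Y : Set (σ → ℝ)} {g : (σ → ℝ) → ℝ} {ε : ℝ}

theorem exists_mvPolynomial_near_of_continuousOn (hY : IsCompact Y) (hg : ContinuousOn g Y)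
    (hε : 0 < ε) : ∃ q : MvPolynomial σ ℝ, ∀ y ∈ Y, |MvPolynomial.eval y q - g y| < ε := by
  have : CompactSpace Y := isCompact_iff_compactSpace.mp hY
  obtain ⟨⟨a, ha⟩, hag⟩ :=
    ContinuousMap.exists_mem_subalgebra_near_continuous_of_separatesPoints
      (mvPolynomialFunctions Y) (mvPolynomialFunctions_separatesPoints Y)
      (Y.domRestrict g) hg.domRestrict ε hε
  obtain ⟨q, hq⟩ := exists_eval_eq_of_mem_mvPolynomialFunctions ha
  refine ⟨q, fun y hy ↦ ?_⟩
  rw [← hq ⟨y, hy⟩]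
  exact hag ⟨y, hy⟩

theorem exists_mvPolynomial_mem_Icc_of_continuousOn (hY : IsCompact Y) (hg : ContinuousOn g Y)
    (hε : 0 < ε) :
    ∃ q : MvPolynomial σ ℝ, ∀ y ∈ Y, MvPolynomial.eval y q ∈ Icc (g y - ε) (g y) := by
  obtain ⟨q, hq⟩ := exists_mvPolynomial_near_of_continuousOn hY hg (half_pos hε)
  refine ⟨q - MvPolynomial.C (ε / 2), fun y hy ↦ ?_⟩
  obtain ⟨hlower, hupper⟩ := abs_lt.mp (hq y hy)
  rw [map_sub, MvPolynomial.eval_C]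
  constructor <;> linarith

theorem exists_mvPolynomial_le_dist_setIntegral_lt [Countable σ] (hY : IsCompact Y)
    (hg : ContinuousOn g Y) (φ : Measure (σ → ℝ)) [IsFiniteMeasureOnCompacts φ] (hε : 0 < ε) :
    ∃ q : MvPolynomial σ ℝ, (∀ y ∈ Y, MvPolynomial.eval y q ≤ g y) ∧
      dist (∫ y in Y, g y ∂φ) (∫ y in Y, MvPolynomial.eval y q ∂φ) < ε := by
  obtain ⟨δ, hδ, hδε⟩ := exists_pos_mul_lt hε (φ.real Y)
  obtain ⟨q, hq⟩ := exists_mvPolynomial_mem_Icc_of_continuousOn hY hg hδ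
  refine ⟨q, fun y hy ↦ (hq y hy).2, ?_⟩
  have hdist : ∀ y ∈ Y, dist (g y) (MvPolynomial.eval y q) ≤ δ := fun y hy ↦ by
    rw [Real.dist_eq, abs_of_nonneg (sub_nonneg.mpr (hq y hy).2)]
    exact sub_le_comm.mp (hq y hy).1
  calc dist (∫ y in Y, g y ∂φ) (∫ y in Y, MvPolynomial.eval y q ∂φ)
      ≤ δ * φ.real Y := dist_setIntegral_le_of_forall_mem_dist_le hY.measure_lt_top
        (hg.integrableOn_compact hY)
        (q.continuous_eval.continuousOn.integrableOn_compact hY) hdist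
    _ < ε := by rwa [mul_comm]

end Approximation

-- Closures are compared, rather than suprema, so that no claim rests on `sSup` of an empty or
-- unbounded set of reals being `0`.
theorem stmt9_general {X σ : Type*} [Countable σ] {Y : Set (σ → ℝ)} (hY : IsCompact Y)
    (f : X × (σ → ℝ) → ℝ) {K : Set (X × (σ → ℝ))} (hKY : ∀ w ∈ K, w.2 ∈ Y)
    (φ : Measure (σ → ℝ)) [IsFiniteMeasureOnCompacts φ] :
    closure {r | ∃ g : (σ → ℝ) → ℝ, ContinuousOn g Y ∧
        (∀ w ∈ K, g w.2 ≤ f w) ∧ r = ∫ y in Y, g y ∂φ}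
      = closure {r | ∃ q : MvPolynomial σ ℝ,
        (∀ w ∈ K, MvPolynomial.eval w.2 q ≤ f w) ∧
        r = ∫ y in Y, MvPolynomial.eval y q ∂φ} := by
  apply Subset.antisymm
  · refine closure_minimal ?_ isClosed_closure
    rintro _ ⟨g, hg, hgf, rfl⟩
    refine Metric.mem_closure_iff.mpr fun ε hε ↦ ?_
    obtain ⟨q, hqg, hdist⟩ := exists_mvPolynomial_le_dist_setIntegral_lt hY hg φ hε
    exact ⟨_, ⟨q, fun w hw ↦ (hqg w.2 (hKY w hw)).trans (hgf w hw), rfl⟩, hdist⟩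
  · refine closure_mono ?_
    rintro _ ⟨q, hqf, rfl⟩
    exact ⟨_, q.continuous_eval.continuousOn, hqf, rfl⟩

/-- the dual value over continuous test functions on `Y` equals the dual
value over polynomials. -/
theorem stmt9 (n p m : ℕ)
    (Y : Set (Fin p → ℝ)) (hYc : IsCompact Y)
    (f : (Fin n → ℝ) × (Fin p → ℝ) → ℝ) (hf : Continuous f)
    (h : Fin m → (Fin n → ℝ) × (Fin p → ℝ) → ℝ) (hh : ∀ j, Continuous (h j))
    (K : Set ((Fin n → ℝ) × (Fin p → ℝ)))
    (hKdef : K = {w | w.2 ∈ Y ∧ ∀ j, 0 ≤ h j w}) (hKc : IsCompact K)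
    (φ : Measure (Fin p → ℝ)) [IsProbabilityMeasure φ] (hφY : φ Yᶜ = 0) :
    sSup {r | ∃ g : (Fin p → ℝ) → ℝ, ContinuousOn g Y ∧
        (∀ w ∈ K, g w.2 ≤ f w) ∧ r = ∫ y in Y, g y ∂φ}
      = sSup {r | ∃ q : MvPolynomial (Fin p) ℝ,
        (∀ w ∈ K, MvPolynomial.eval w.2 q ≤ f w) ∧
        r = ∫ y in Y, MvPolynomial.eval y q ∂φ} := by
  have hKY : ∀ w ∈ K, w.2 ∈ Y := fun w hw ↦ (hKdef ▸ hw).1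
  exact csSup_eq_csSup_of_closure_eq (stmt9_general hYc f hKY φ)
end
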